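/- arXiv:1710.01350 — 2 statements merged into one kernel-verified Lean document; each statement's English description precedes it below -/
import Mathlib

section
/- Suppose ν assigns a nonnegative real number ν(λ,b) to each pair consisting of a partition λ and an element b of G_λ = ⨁_i ℤ/p^{λ_i}ℤ, such that ν(λ, σ(b)) = ν(λ, b) for every automorphism σ of G_λ (so ν depends only on the isomorphism class of the pointed group (G_λ, b)). If for every finite abelian p-group A and every a ∈ A one has ∑_λ ∑_{b ∈ G_λ} ν(λ,b) · |Sur((G_λ,b),(A,a))| = 1/|A|, then ν(λ,b) = μ^0(G_λ)/|G_λ| for every λ and every b ∈ G_λ; that is, ν coincides with the pointed Cohen–Lenstra measure μ on isomorphism classes of pointed finite abelian p-groups. -/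
/-!
Cohen–Lenstra moments: for every integer `u ≥ 0` and every finite abelian `p`-group `A`,
the sum over isomorphism classes of finite abelian `p`-groups `B` of `|Sur(B,A)| · μ^u(B)`
equals `|A|^{-u}`.
-/

open scoped Classical

/-- The number of surjective group homomorphisms `B → A`. -/
noncomputable def numSur (B A : Type*) [AddCommGroup B] [AddCommGroup A] : ℕ :=
  Nat.card {f : B →+ A // Function.Surjective f}

/-- The number of automorphisms of `A`. -/
noncomputable def numAut (A : Type*) [AddCommGroup A] : ℕ :=
  Nat.card (A ≃+ A)

/-- The infinite product `∏_{k=1}^∞ (1 - p^{-(k+u)})`. -/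
noncomputable def clProd (p u : ℕ) : ℝ :=
  ∏' k : ℕ, (1 - (p : ℝ) ^ (-((k : ℤ) + 1 + u)))

/-- The Cohen–Lenstra measure `μ^u(A) = |A|^{-u} |Aut(A)|^{-1} ∏_{k=1}^∞ (1 - p^{-(k+u)})`. -/
noncomputable def clMeasure (p u : ℕ) (A : Type*) [AddCommGroup A] : ℝ :=
  ((Nat.card A : ℝ) ^ u)⁻¹ * ((numAut A : ℝ))⁻¹ * clProd p u

/-- The finite abelian `p`-group `G_λ = ⨁_i ℤ/p^{λ_i}ℤ` associated to a partition `λ`,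
a finite multiset of positive integers. -/
def CLGroup (p : ℕ) (lam : Multiset ℕ+) : Type :=
  ∀ i : Fin lam.toList.length, ZMod (p ^ ((lam.toList.get i : ℕ+) : ℕ))

noncomputable instance (p : ℕ) (lam : Multiset ℕ+) : AddCommGroup (CLGroup p lam) := by
  delta CLGroup; infer_instance

/-- The number of surjective group homomorphisms `B → A` sending `b` to `a`. -/
noncomputable def numPointedSur (B : Type*) [AddCommGroup B] (b : B)
    (A : Type*) [AddCommGroup A] (a : A) : ℕ :=
  Nat.card {f : B →+ A // Function.Surjective f ∧ f b = a}


/-! ### Part 1: the weights `w_k` and Euler's identity -/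

/-- The sieve weight `w_k = ∏_{j=1}^k (1-q^j)⁻¹`. -/
noncomputable def clW (q : ℝ) (k : ℕ) : ℝ := ∏ j ∈ Finset.range k, (1 - q ^ (j + 1))⁻¹

lemma clW_succ (q : ℝ) (k : ℕ) : clW q (k + 1) = clW q k * (1 - q ^ (k + 1))⁻¹ := by
  simp only [clW, Finset.prod_range_succ]

lemma cl_pow_ge {q : ℝ} (hq : 3 ≤ q) (k : ℕ) : 3 ≤ q ^ (k + 1) :=
  hq.trans (le_self_pow₀ (by linarith) (by omega))

lemma clW_abs_le {q : ℝ} (hq : 3 ≤ q) (k : ℕ) : |clW q k| ≤ (1 / 2 : ℝ) ^ k := by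
  induction k with
  | zero => simp [clW]
  | succ k ih =>
    rw [clW_succ, abs_mul, pow_succ]
    have h3 := cl_pow_ge hq k
    have : |(1 - q ^ (k + 1))⁻¹| ≤ 1 / 2 := by
      rw [abs_inv, abs_of_neg (by linarith), inv_le_comm₀ (by linarith) (by norm_num)]
      linarith
    exact mul_le_mul ih this (abs_nonneg _) (pow_nonneg (by norm_num) _)

lemma clW_partial {q : ℝ} (hq : 3 ≤ q) (X : ℝ) (m : ℕ) :
    ∑ k ∈ Finset.range (m + 1), clW q k * ∏ i ∈ Finset.range k, (X - q ^ i)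
      = ∏ i ∈ Finset.range m, (X - q ^ (i + 1)) * (1 - q ^ (i + 1))⁻¹ := by
  induction m with
  | zero => simp [clW]
  | succ m ih =>
    rw [Finset.sum_range_succ, ih, Finset.prod_range_succ' (fun i => X - q ^ i) m,
      Finset.prod_range_succ, clW_succ, Finset.prod_mul_distrib]
    have h3 := cl_pow_ge hq m
    have hne : (1 - q ^ (m + 1)) ≠ 0 := by linarith
    have : clW q m = ∏ j ∈ Finset.range m, (1 - q ^ (j + 1))⁻¹ := rfl
    rw [this]
    generalize ∏ j ∈ Finset.range m, (1 - q ^ (j + 1))⁻¹ = u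
    generalize ∏ j ∈ Finset.range m, (X - q ^ (j + 1)) = v
    field_simp
    ring

lemma clW_sieve {q : ℝ} (hq : 3 ≤ q) (d : ℕ) :
    HasSum (fun k => clW q k * ∏ i ∈ Finset.range k, (q ^ d - q ^ i)) (if d = 0 then 1 else 0) := by
  have h := hasSum_sum_of_ne_finset_zero (L := .unconditional ℕ) (s := Finset.range (d + 1))
    (f := fun k => clW q k * ∏ i ∈ Finset.range k, (q ^ d - q ^ i)) (by
      intro k hk
      simp only [Finset.mem_range, not_lt] at hk
      rw [Finset.prod_eq_zero (i := d) (by simp; omega) (by simp), mul_zero])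
  rw [clW_partial hq] at h
  convert h using 1
  cases d with
  | zero => simp
  | succ d =>
    rw [if_neg (by omega), eq_comm]
    exact Finset.prod_eq_zero (i := d) (by simp) (by simp)

lemma clW_summable {q : ℝ} (hq : 3 ≤ q) {z : ℝ} (hz0 : 0 ≤ z) (hz : z ≤ 1) :
    Summable (fun k => clW q k * z ^ k) := by
  refine Summable.of_norm_bounded (g := fun k => (1 / 2 : ℝ) ^ k)
    (summable_geometric_of_lt_one (by norm_num) (by norm_num)) fun k => ?_
  rw [norm_mul, Real.norm_eq_abs, norm_pow, Real.norm_of_nonneg hz0]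
  calc |clW q k| * z ^ k ≤ (1 / 2 : ℝ) ^ k * 1 := by
        gcongr
        · exact clW_abs_le hq k
        · exact pow_le_one₀ hz0 hz
    _ = _ := mul_one _

lemma clW_fun_eq {q : ℝ} (hq : 3 ≤ q) {z : ℝ} (hz0 : 0 ≤ z) (hz : q * z ≤ 1) :
    ∑' k, clW q k * (q * z) ^ k = (1 - z) * ∑' k, clW q k * z ^ k := by
  have hz1 : z ≤ 1 := by nlinarith
  have s1 := clW_summable hq hz0 hz1
  have s2 := clW_summable hq (by positivity : 0 ≤ q * z) hz
  have key : ∀ k, clW q (k + 1) * z ^ (k + 1) - clW q (k + 1) * (q * z) ^ (k + 1)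
      = z * (clW q k * z ^ k) := by
    intro k
    have h3 := cl_pow_ge hq k
    have hne : (1 - q ^ (k + 1)) ≠ 0 := by linarith
    rw [clW_succ, mul_pow]
    field_simp
    ring
  have e : ∑' k, clW q k * z ^ k - ∑' k, clW q k * (q * z) ^ k
      = z * ∑' k, clW q k * z ^ k := by
    rw [← Summable.tsum_sub s1 s2, (s1.sub s2).tsum_eq_zero_add, ← tsum_mul_left]
    simp [key]
  linarith

lemma clW_euler {p : ℕ} (hp : 3 ≤ p) : ∑' k, clW (p : ℝ) k = clProd p 0 := by
  have hq : (3 : ℝ) ≤ p := by exact_mod_cast hp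
  set q : ℝ := (p : ℝ) with hqd
  set f : ℝ → ℝ := fun z => ∑' k, clW q k * z ^ k with hf
  have hq0 : 0 < q := by linarith
  have hx1 : q⁻¹ ≤ 1 / 2 := by rw [inv_le_comm₀ hq0 (by norm_num)]; linarith
  have hx0 : 0 < q⁻¹ := by positivity
  have hN : ∀ N, f 1 = (∏ i ∈ Finset.range N, (1 - q⁻¹ ^ (i + 1))) * f (q⁻¹ ^ N) := by
    intro N
    induction N with
    | zero => simp
    | succ N ih =>
      rw [ih, Finset.prod_range_succ, mul_assoc]
      congr 1
      have e : q * q⁻¹ ^ (N + 1) = q⁻¹ ^ N := by rw [pow_succ]; field_simp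
      have := clW_fun_eq hq (z := q⁻¹ ^ (N + 1)) (by positivity)
        (by rw [e]; exact pow_le_one₀ hx0.le (by linarith))
      rw [e] at this
      exact this
  have hlim : Filter.Tendsto (fun N => f (q⁻¹ ^ N)) Filter.atTop (nhds 1) := by
    have hb : ∀ z, 0 ≤ z → z ≤ 1 → |f z - 1| ≤ z * 2 := by
      intro z h0 h1
      have s1 := clW_summable hq h0 h1
      have : f z - 1 = ∑' k, clW q (k + 1) * z ^ (k + 1) := by
        simp only [hf]
        rw [s1.tsum_eq_zero_add]; simp [clW]
      rw [this, ← Real.norm_eq_abs]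
      refine tsum_of_norm_bounded (g := fun k => z * (1 / 2 : ℝ) ^ k) ?_ fun k => ?_
      · exact hasSum_geometric_two.mul_left z
      · rw [norm_mul, Real.norm_eq_abs, norm_pow, Real.norm_of_nonneg h0]
        have h2 := clW_abs_le hq (k + 1)
        have h3 : (1 / 2 : ℝ) ^ (k + 1) ≤ (1 / 2) ^ k :=
          pow_le_pow_of_le_one (by norm_num) (by norm_num) (by omega)
        have h4 : z ^ (k + 1) ≤ z := pow_le_of_le_one h0 h1 (by omega)
        calc |clW q (k + 1)| * z ^ (k + 1) ≤ (1 / 2 : ℝ) ^ k * z := by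
              gcongr; exact h2.trans h3
          _ = _ := mul_comm _ _
    rw [tendsto_iff_norm_sub_tendsto_zero]
    have hg : Filter.Tendsto (fun N : ℕ => q⁻¹ ^ N * 2) Filter.atTop (nhds 0) := by
      simpa using (tendsto_pow_atTop_nhds_zero_of_lt_one hx0.le (by linarith)).mul_const 2
    exact squeeze_zero (fun _ => norm_nonneg _)
      (fun N => hb _ (by positivity) (pow_le_one₀ hx0.le (by linarith))) hg
  have hprod : Filter.Tendsto (fun N => ∏ i ∈ Finset.range N, (1 - q⁻¹ ^ (i + 1)))
      Filter.atTop (nhds (clProd p 0)) := by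
    have hm : Multipliable fun k : ℕ => (1 + -(q⁻¹ ^ (k + 1))) := by
      apply Real.multipliable_one_add_of_summable
      apply Summable.neg
      exact (summable_nat_add_iff 1).2 (summable_geometric_of_lt_one hx0.le (by linarith))
    have := hm.hasProd.tendsto_prod_nat
    have e : clProd p 0 = ∏' k : ℕ, (1 + -(q⁻¹ ^ (k + 1))) := by
      unfold clProd
      congr 1; ext k
      rw [← sub_eq_add_neg, inv_pow, ← zpow_natCast, ← zpow_neg]
      simp [hqd]
    rw [e]
    simpa [sub_eq_add_neg] using this
  have h1 := hprod.mul hlim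
  have h2 : Filter.Tendsto (fun N => (∏ i ∈ Finset.range N, (1 - q⁻¹ ^ (i + 1))) * f (q⁻¹ ^ N))
      Filter.atTop (nhds (f 1)) := by
    simp_rw [← hN]; exact tendsto_const_nhds
  have := tendsto_nhds_unique h2 h1
  simpa [hf] using this

lemma cl_hasSum_congr {ι : Type*} {f g : ι → ℝ} {a : ℝ} (hg : HasSum g a)
    (h : ∀ x, f x = g x) : HasSum f a := by
  rw [funext h]; exact hg

lemma cl_swap {X : Type*} (N : ℕ → X → ℝ) (w : ℕ → ℝ) (ν M : X → ℝ) (c : ℝ)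
    (hn : ∀ k x, 0 ≤ ν x * N k x) (hw : Summable (fun k => |w k|))
    (hN : ∀ k, HasSum (fun x => ν x * N k x) c)
    (hM : ∀ x, HasSum (fun k => w k * N k x) (M x)) :
    HasSum (fun x => ν x * M x) ((∑' k, w k) * c) := by
  have hsum : Summable (fun y : ℕ × X => w y.1 * (ν y.2 * N y.1 y.2)) := by
    apply Summable.of_abs
    have e : (fun y : ℕ × X => |w y.1 * (ν y.2 * N y.1 y.2)|)
        = fun y : ℕ × X => |w y.1| * (ν y.2 * N y.1 y.2) := by
      funext y
      rw [abs_mul, abs_of_nonneg (hn _ _)]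
    rw [e, summable_prod_of_nonneg (fun y => mul_nonneg (abs_nonneg (w y.1)) (hn y.1 y.2))]
    refine ⟨fun k => (hN k).summable.mul_left |w k|, ?_⟩
    have e2 : (fun k => ∑' x, |w k| * (ν x * N k x)) = fun k => |w k| * c := by
      funext k
      rw [tsum_mul_left, (hN k).tsum_eq]
    dsimp only
    rw [e2]
    exact hw.mul_right _
  have h1 := hsum.hasSum.prod_fiberwise (fun k => (hN k).mul_left (w k))
  have h2 : HasSum (fun x => ν x * M x) (∑' y : ℕ × X, w y.1 * (ν y.2 * N y.1 y.2)) := by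
    have h3 : HasSum (fun y : X × ℕ => w y.2 * (ν y.1 * N y.2 y.1))
        (∑' y : ℕ × X, w y.1 * (ν y.2 * N y.1 y.2)) :=
      (Equiv.prodComm X ℕ).hasSum_iff.2 hsum.hasSum
    refine h3.prod_fiberwise fun x => ?_
    exact cl_hasSum_congr ((hM x).mul_left (ν x)) fun k => by ring
  rw [← h1.tsum_eq, tsum_mul_right] at h2
  exact h2

/-! ### Part 2: counting surjections onto `𝔽_p^k` -/

lemma cl_finite_hom (B A : Type*) [AddCommGroup B] [AddCommGroup A] [Finite B] [Finite A] :
    Finite (B →+ A) :=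
  Finite.of_injective (fun f : B →+ A => (f : B → A)) DFunLike.coe_injective

lemma cl_surj_iff_linInd {p : ℕ} [Fact p.Prime] {K : Type*} [AddCommGroup K] {k : ℕ}
    (s : Fin k → (K →+ ZMod p)) :
    LinearIndependent (ZMod p) s ↔ Function.Surjective (AddMonoidHom.pi s) := by
  rw [Fintype.linearIndependent_iff]
  constructor
  · intro h
    by_contra hns
    set W : Submodule (ZMod p) (Fin k → ZMod p) :=
      AddSubgroup.toZModSubmodule p (AddMonoidHom.pi s).range with hW
    have hlt : W < ⊤ := by
      rw [lt_top_iff_ne_top]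
      intro htop
      apply hns
      intro y
      have : y ∈ W := by rw [htop]; trivial
      simpa [hW] using this
    obtain ⟨f, hf0, hf⟩ := Submodule.exists_le_ker_of_lt_top W hlt
    have hc := h (fun i => f (Pi.single i 1)) (by
      ext x
      have hx : f (AddMonoidHom.pi s x) = 0 := by
        have : AddMonoidHom.pi s x ∈ W := by
          rw [hW, AddSubgroup.mem_toZModSubmodule]
          exact ⟨x, rfl⟩
        exact hf this
      have hsum : AddMonoidHom.pi s x = ∑ i, (s i x) • (Pi.single i 1 : Fin k → ZMod p) := by
        funext j
        simp [Finset.sum_apply, Pi.single_apply]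
      rw [hsum, map_sum] at hx
      simpa [AddMonoidHom.finsetSum_apply, mul_comm] using hx)
    apply hf0
    apply LinearMap.pi_ext'
    intro i
    ext
    simpa using hc i
  · intro h g hg i
    obtain ⟨x, hx⟩ := h (Pi.single i 1)
    have h1 := DFunLike.congr_fun hg x
    have h2 : ∀ j, s j x = (Pi.single i 1 : Fin k → ZMod p) j := fun j => congrFun hx j
    simpa [AddMonoidHom.finsetSum_apply, h2, Pi.single_apply] using h1

lemma cl_exists_dual {p : ℕ} [hp : Fact p.Prime] {M : Type*} [AddCommGroup M] [Module (ZMod p) M]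
    {x : M} (hx : x ≠ 0) : ∃ f : M →+ ZMod p, f x ≠ 0 := by
  obtain ⟨f, hf⟩ := Module.Projective.exists_dual_ne_zero (ZMod p) hx
  exact ⟨f.toAddMonoidHom, hf⟩

lemma cl_exists_hom {p : ℕ} [hp : Fact p.Prime] {K : Type*} [AddCommGroup K] [Finite K]
    (hK : ∃ n, Nat.card K = p ^ n) (h : Subsingleton (K →+ ZMod p)) : Nat.card K = 1 := by
  by_contra hne
  obtain ⟨n, hn⟩ := hK
  have hdvd : p ∣ Nat.card K := by
    rw [hn]; apply dvd_pow_self; rintro rfl; simp at hn; exact hne hn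
  obtain ⟨x, hx⟩ := exists_prime_addOrderOf_dvd_card' p hdvd
  have hxne : x ≠ 0 := by
    rintro rfl; simp at hx; exact hp.out.one_lt.ne hx
  set P : AddSubgroup K := (nsmulAddMonoidHom (α := K) p).range with hP
  have hns : ¬ Function.Surjective (nsmulAddMonoidHom (α := K) p) := by
    intro hs
    have hi := Finite.injective_iff_surjective.2 hs
    apply hxne
    apply hi
    simp [← hx, addOrderOf_nsmul_eq_zero]
  obtain ⟨y, hy⟩ : ∃ y, y ∉ P := by
    by_contra hall
    push Not at hall
    exact hns fun y => hall y
  let _ : Module (ZMod p) (K ⧸ P) := QuotientAddGroup.zmodModule (fun x => ⟨x, rfl⟩)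
  have hy' : (QuotientAddGroup.mk y : K ⧸ P) ≠ 0 := by
    rwa [Ne, QuotientAddGroup.eq_zero_iff]
  obtain ⟨f, hf⟩ := cl_exists_dual (p := p) hy'
  apply hf
  have := DFunLike.congr_fun (h.elim (f.comp (QuotientAddGroup.mk' P)) 0) y
  simpa using this

lemma cl_card_sur {p : ℕ} [hp : Fact p.Prime] {K : Type*} [AddCommGroup K] [Finite K]
    (hK : ∃ n, Nat.card K = p ^ n) : ∃ d : ℕ, (d = 0 ↔ Nat.card K = 1) ∧
      ∀ k, (Nat.card {ψ : K →+ (Fin k → ZMod p) // Function.Surjective ψ} : ℝ)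
        = ∏ i ∈ Finset.range k, ((p : ℝ) ^ d - (p : ℝ) ^ i) := by
  have := cl_finite_hom K (ZMod p)
  refine ⟨Module.finrank (ZMod p) (K →+ ZMod p), ?_, fun k => ?_⟩
  · rw [Module.finrank_zero_iff]
    constructor
    · exact cl_exists_hom hK
    · intro h
      have := (Nat.card_eq_one_iff_unique.1 h).1
      exact ⟨fun f g => by ext x; rw [Subsingleton.elim x 0]; simp⟩
  · have e : Nat.card {ψ : K →+ (Fin k → ZMod p) // Function.Surjective ψ}
        = Nat.card {s : Fin k → (K →+ ZMod p) // LinearIndependent (ZMod p) s} := by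
      symm
      refine Nat.card_eq_of_bijective
        (fun s => ⟨AddMonoidHom.pi s.1, (cl_surj_iff_linInd s.1).1 s.2⟩) ⟨?_, ?_⟩
      · intro s t hst
        apply Subtype.ext
        funext i
        ext x
        have := DFunLike.congr_fun (congrArg Subtype.val hst) x
        exact congrFun this i
      · rintro ⟨ψ, hψ⟩
        refine ⟨⟨fun i => (Pi.evalAddMonoidHom _ i).comp ψ, ?_⟩, ?_⟩
        · rw [cl_surj_iff_linInd]
          exact hψ
        · rfl
    rw [e]
    set n := Module.finrank (ZMod p) (K →+ ZMod p) with hn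
    by_cases hk : k ≤ n
    · rw [card_linearIndependent hk, ZMod.card, Finset.prod_range, Nat.cast_prod]
      refine Finset.prod_congr rfl fun i _ => ?_
      rw [Nat.cast_sub (Nat.pow_le_pow_right hp.out.pos (by omega))]
      simp [hn]
    · rw [Finset.prod_eq_zero (i := n) (by simp; omega) (by simp)]
      have : IsEmpty {s : Fin k → (K →+ ZMod p) // LinearIndependent (ZMod p) s} := by
        refine ⟨fun s => hk ?_⟩
        simpa using s.2.fintype_card_le_finrank
      simp

/-! ### Part 3: extensions of `A` by `V` -/

lemma cl_factor {V E A M : Type*} [AddCommGroup V] [AddCommGroup E] [AddCommGroup A]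
    [AddCommGroup M] (i : V →+ E) (π : E →+ A) (hi : Function.Injective i)
    (hex : ∀ e, π e = 0 ↔ ∃ v, i v = e) (h : M →+ E) (hh : ∀ m, π (h m) = 0) :
    ∃ h' : M →+ V, ∀ m, i (h' m) = h m := by
  have : ∀ m, ∃ v, i v = h m := fun m => (hex _).1 (hh m)
  choose f hf using this
  exact ⟨AddMonoidHom.mk' f (fun a b => hi (by simp [hf])), hf⟩

/-- The restriction of a lift `s₀ : F → B` of `q : F → A` to the kernels. -/
def clRes {F A B : Type*} [AddCommGroup F] [AddCommGroup A] [AddCommGroup B]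
    (q : F →+ A) (φ : B →+ A) (s₀ : F →+ B) (hs₀ : ∀ x, φ (s₀ x) = q x) : q.ker →+ φ.ker :=
  (s₀.comp q.ker.subtype).codRestrict φ.ker (fun x => by
    rw [AddMonoidHom.mem_ker]
    exact (hs₀ x).trans (AddMonoidHom.mem_ker.1 x.2))

lemma cl_fiber {F V E A B : Type*} [AddCommGroup F] [AddCommGroup V] [AddCommGroup E]
    [AddCommGroup A] [AddCommGroup B]
    (q : F →+ A) (i : V →+ E) (π : E →+ A) (s : F →+ E) (χ : q.ker →+ V) (φ : B →+ A)
    (s₀ : F →+ B) (hi : Function.Injective i) (hex : ∀ e, π e = 0 ↔ ∃ v, i v = e)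
    (hs : ∀ x, π (s x) = q x) (hχ : ∀ l : q.ker, s l = i (χ l)) (hs₀ : ∀ x, φ (s₀ x) = q x)
    (hq : Function.Surjective q) (hφ : Function.Surjective φ) :
    Nonempty ({t : {ψ : φ.ker →+ V // Function.Surjective ψ} × (F →+ V) //
        t.1.1.comp (clRes q φ s₀ hs₀) - t.2.comp q.ker.subtype = χ} ≃
      {g : B →+ E // π.comp g = φ ∧ Function.Surjective g}) := by
  have hiπ : ∀ v, π (i v) = 0 := fun v => (hex _).2 ⟨v, rfl⟩
  -- the presentation of `B`
  let Θ : φ.ker × F →+ B := φ.ker.subtype.coprod s₀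
  have hΘ : Function.Surjective Θ := by
    intro b
    obtain ⟨x, hx⟩ := hq (φ b)
    refine ⟨(⟨b - s₀ x, ?_⟩, x), ?_⟩
    · rw [AddMonoidHom.mem_ker]; simp [hs₀, hx]
    · simp [Θ]
  -- surjectivity criterion
  have hsurj : ∀ (g : B →+ E) (ψ : φ.ker →+ V), π.comp g = φ → (∀ k : φ.ker, i (ψ k) = g k) →
      (Function.Surjective g ↔ Function.Surjective ψ) := by
    intro g ψ hg hψ
    have hg' : ∀ b, π (g b) = φ b := fun b => DFunLike.congr_fun hg b
    constructor
    · intro h v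
      obtain ⟨b, hb⟩ := h (i v)
      refine ⟨⟨b, ?_⟩, hi ?_⟩
      · rw [AddMonoidHom.mem_ker, ← hg', hb, hiπ]
      · rw [hψ, hb]
    · intro h e
      obtain ⟨b, hb⟩ := hφ (π e)
      obtain ⟨v, hv⟩ := (hex (e - g b)).1 (by simp [hg', hb])
      obtain ⟨k, hk⟩ := h v
      refine ⟨k + b, ?_⟩
      rw [map_add, ← hψ, hk, hv]; abel
  have hex1 : ∀ t : {t : {ψ : φ.ker →+ V // Function.Surjective ψ} × (F →+ V) //
        t.1.1.comp (clRes q φ s₀ hs₀) - t.2.comp q.ker.subtype = χ},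
      ∃ g : B →+ E, (∀ k : φ.ker, g k = i (t.1.1.1 k)) ∧ (∀ x, g (s₀ x) = i (t.1.2 x) + s x) := by
    rintro ⟨⟨⟨ψ, hψ⟩, v⟩, ht⟩
    dsimp only at ht ⊢
    let G : φ.ker × F →+ E := (i.comp ψ).coprod (i.comp v + s)
    have hker : Θ.ker ≤ G.ker := by
      rintro ⟨k, x⟩ hkx
      rw [AddMonoidHom.mem_ker] at hkx ⊢
      have h1 : (k : B) + s₀ x = 0 := by simpa [Θ] using hkx
      have hx : x ∈ q.ker := by
        rw [AddMonoidHom.mem_ker, ← hs₀]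
        have := congrArg φ h1
        simpa [AddMonoidHom.mem_ker.1 k.2] using this
      have hk : k = - clRes q φ s₀ hs₀ ⟨x, hx⟩ := by
        apply Subtype.ext
        simpa [clRes] using eq_neg_of_add_eq_zero_left h1
      have h2 : ψ (clRes q φ s₀ hs₀ ⟨x, hx⟩) - v x = χ ⟨x, hx⟩ := DFunLike.congr_fun ht ⟨x, hx⟩
      have h3 : s x = i (χ ⟨x, hx⟩) := hχ ⟨x, hx⟩
      simp [G, hk, h3, ← h2]
    refine ⟨Θ.liftOfSurjective hΘ ⟨G, hker⟩, ?_, ?_⟩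
    · intro k
      have := Θ.liftOfRightInverse_comp_apply _ (Function.rightInverse_surjInv hΘ) ⟨G, hker⟩ (k, 0)
      simpa [Θ, G] using this
    · intro x
      have := Θ.liftOfRightInverse_comp_apply _ (Function.rightInverse_surjInv hΘ) ⟨G, hker⟩ (0, x)
      simpa [Θ, G] using this
  choose f hf1 hf2 using hex1
  have hfφ : ∀ t, π.comp (f t) = φ := by
    intro t
    ext b
    obtain ⟨⟨k, x⟩, rfl⟩ := hΘ b
    simp [Θ, hf1, hf2, hiπ, hs, hs₀, AddMonoidHom.mem_ker.1 k.2]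
  refine ⟨Equiv.ofBijective (fun t => ⟨f t, hfφ t,
    (hsurj (f t) t.1.1.1 (hfφ t) (fun k => (hf1 t k).symm)).2 t.1.1.2⟩) ⟨?_, ?_⟩⟩
  · intro t t' htt
    have htt : f t = f t' := congrArg Subtype.val htt
    apply Subtype.ext
    apply Prod.ext
    · apply Subtype.ext
      ext k
      apply hi
      rw [← hf1, ← hf1, htt]
    · ext x
      apply hi
      have h1 := hf2 t x
      rw [htt, hf2] at h1
      exact (add_right_cancel h1).symm
  · rintro ⟨g, hg, hgs⟩
    have hg' : ∀ b, π (g b) = φ b := fun b => DFunLike.congr_fun hg b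
    obtain ⟨ψ, hψ⟩ := cl_factor i π hi hex (g.comp φ.ker.subtype) (fun k => by
      simp [hg', AddMonoidHom.mem_ker.1 k.2])
    obtain ⟨v, hv⟩ := cl_factor i π hi hex (g.comp s₀ - s) (fun x => by
      simp [hg', hs, hs₀])
    have hcond : ψ.comp (clRes q φ s₀ hs₀) - v.comp q.ker.subtype = χ := by
      ext l
      apply hi
      have h1 := hψ (clRes q φ s₀ hs₀ l)
      have h2 := hv l
      simp [clRes] at h1 h2 ⊢
      rw [h1, h2, hχ]
      abel
    refine ⟨⟨(⟨ψ, (hsurj g ψ hg hψ).1 hgs⟩, v), hcond⟩, ?_⟩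
    apply Subtype.ext
    ext b
    obtain ⟨⟨k, x⟩, rfl⟩ := hΘ b
    have h1 := hψ k
    have h2 := hv x
    simp at h1 h2
    simp [Θ, hf1, hf2, h1, h2]

lemma cl_exists_ext {F V A : Type} [AddCommGroup F] [AddCommGroup V] [AddCommGroup A]
    (q : F →+ A) (hq : Function.Surjective q) (χ : q.ker →+ V) :
    ∃ (E : Type) (_ : AddCommGroup E) (i : V →+ E) (π : E →+ A) (s : F →+ E),
      Function.Injective i ∧ (∀ e, π e = 0 ↔ ∃ v, i v = e) ∧ (∀ x, π (s x) = q x) ∧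
      (∀ l : q.ker, s l = i (χ l)) ∧ Function.Surjective π := by
  let N : AddSubgroup (F × V) := (q.ker.subtype.prod (-χ)).range
  have hN : ∀ y : F × V, y ∈ N ↔ ∃ l : q.ker, (l : F) = y.1 ∧ - χ l = y.2 := by
    rintro ⟨x, v⟩
    simp [N, Prod.ext_iff]
  let mk := QuotientAddGroup.mk' N
  let π : (F × V) ⧸ N →+ A := QuotientAddGroup.lift N (q.comp (AddMonoidHom.fst F V)) (by
    intro y hy
    obtain ⟨l, hl, _⟩ := (hN y).1 hy
    have := AddMonoidHom.mem_ker.1 l.2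
    simpa [← hl] using this)
  have hπ : ∀ y, π (mk y) = q y.1 := fun y => rfl
  have hmk : Function.Surjective mk := QuotientAddGroup.mk'_surjective N
  have hmk0 : ∀ y, mk y = 0 ↔ y ∈ N := fun y => QuotientAddGroup.eq_zero_iff y
  refine ⟨(F × V) ⧸ N, inferInstance, mk.comp (AddMonoidHom.inr F V), π,
    mk.comp (AddMonoidHom.inl F V), ?_, ?_, ?_, ?_, ?_⟩
  · rw [injective_iff_map_eq_zero]
    intro v hv
    obtain ⟨l, hl, hl2⟩ := (hN _).1 ((hmk0 _).1 hv)
    have : l = 0 := Subtype.ext (by simpa using hl)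
    simpa [this] using hl2.symm
  · intro e
    obtain ⟨⟨x, w⟩, rfl⟩ := hmk e
    rw [hπ]
    constructor
    · intro h
      refine ⟨w + χ ⟨x, h⟩, ?_⟩
      rw [← sub_eq_zero, AddMonoidHom.comp_apply, ← map_sub, hmk0, hN]
      exact ⟨-⟨x, h⟩, by simp, by simp⟩
    · rintro ⟨v, hv⟩
      rw [← hπ, ← hv]
      simp [hπ]
  · intro x
    simp [hπ]
  · intro l
    rw [← sub_eq_zero, AddMonoidHom.comp_apply, AddMonoidHom.comp_apply, ← map_sub, hmk0, hN]
    exact ⟨l, by simp, by simp⟩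
  · intro a
    obtain ⟨x, hx⟩ := hq a
    exact ⟨mk (x, 0), by rw [hπ, hx]⟩

/-! ### Part 4: the sieve moments -/

lemma cl_card_fiber {V E A : Type*} [AddCommGroup V] [AddCommGroup E] [AddCommGroup A]
    (i : V →+ E) (π : E →+ A) (hi : Function.Injective i)
    (hex : ∀ e, π e = 0 ↔ ∃ v, i v = e) (hπ : Function.Surjective π) (a : A) :
    Nonempty (V ≃ {e : E // π e = a}) := by
  obtain ⟨e₀, he₀⟩ := hπ a
  refine ⟨Equiv.ofBijective (fun v => ⟨i v + e₀, ?_⟩) ⟨?_, ?_⟩⟩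
  · rw [map_add, (hex _).2 ⟨v, rfl⟩, zero_add, he₀]
  · intro v w h
    exact hi (add_right_cancel (congrArg Subtype.val h))
  · rintro ⟨e, he⟩
    obtain ⟨v, hv⟩ := (hex (e - e₀)).1 (by simp [he, he₀])
    exact ⟨v, Subtype.ext (by simp [hv])⟩

lemma cl_moment_chi {p : ℕ} {X : Type*} (B : X → Type) [∀ x, AddCommGroup (B x)]
    [∀ x, Finite (B x)] (b : ∀ x, B x) (ν : X → ℝ)
    (hmom : ∀ (A : Type) [AddCommGroup A], (∃ n : ℕ, Nat.card A = p ^ n) → ∀ a : A,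
      HasSum (fun x => ν x * (numPointedSur (B x) (b x) A a : ℝ)) (Nat.card A : ℝ)⁻¹)
    {F V A : Type} [AddCommGroup F] [AddCommGroup V] [AddCommGroup A] [Finite A] [Finite V]
    (hA : ∃ n : ℕ, Nat.card A = p ^ n) (hV : ∃ n : ℕ, Nat.card V = p ^ n) (a : A)
    (q : F →+ A) (hq : Function.Surjective q)
    (s₀ : ∀ x, {φ : B x →+ A // Function.Surjective φ ∧ φ (b x) = a} → (F →+ B x))
    (hs₀ : ∀ x φ y, φ.1 (s₀ x φ y) = q y) (χ : q.ker →+ V) :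
    HasSum (fun x => ν x * (Nat.card (Σ φ : {φ : B x →+ A // Function.Surjective φ ∧ φ (b x) = a},
      {t : {ψ : φ.1.ker →+ V // Function.Surjective ψ} × (F →+ V) //
        t.1.1.comp (clRes q φ.1 (s₀ x φ) (hs₀ x φ)) - t.2.comp q.ker.subtype = χ}) : ℝ))
      (Nat.card A : ℝ)⁻¹ := by
  obtain ⟨E, _, i, π, s, hi, hex, hs, hχ, hπ⟩ := cl_exists_ext q hq χ
  have hfib := fun a => (cl_card_fiber i π hi hex hπ a)
  have hEeq : E ≃ A × V := (Equiv.sigmaFiberEquiv π).symm.trans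
    ((Equiv.sigmaCongrRight fun a => (hfib a).some.symm).trans (Equiv.sigmaEquivProd A V))
  have hEfin : Finite E := Finite.of_equiv _ hEeq.symm
  have hEcard : Nat.card E = Nat.card A * Nat.card V := by
    rw [Nat.card_congr hEeq, Nat.card_prod]
  have hE : ∃ n : ℕ, Nat.card E = p ^ n := by
    obtain ⟨n, hn⟩ := hA
    obtain ⟨m, hm⟩ := hV
    exact ⟨n + m, by rw [hEcard, hn, hm, pow_add]⟩
  let _ : Fintype {e : E // π e = a} := Fintype.ofFinite _
  have h := hasSum_sum (s := Finset.univ) (fun (e : {e : E // π e = a}) _ => hmom E hE e.1)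
  have hval : ∑ e : {e : E // π e = a}, (Nat.card E : ℝ)⁻¹ = (Nat.card A : ℝ)⁻¹ := by
    rw [Finset.sum_const, Finset.card_univ, ← Nat.card_eq_fintype_card,
      ← Nat.card_congr (hfib a).some, hEcard, nsmul_eq_mul, Nat.cast_mul]
    have : (Nat.card V : ℝ) ≠ 0 := by exact_mod_cast Nat.card_pos.ne'
    field_simp
  rw [hval] at h
  convert h using 2 with x
  rw [← Finset.mul_sum, ← Nat.cast_sum]
  congr 2
  have hfinE := cl_finite_hom (B x) E
  unfold numPointedSur
  rw [← Nat.card_sigma]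
  have e1 : (Σ φ : {φ : B x →+ A // Function.Surjective φ ∧ φ (b x) = a},
      {t : {ψ : φ.1.ker →+ V // Function.Surjective ψ} × (F →+ V) //
        t.1.1.comp (clRes q φ.1 (s₀ x φ) (hs₀ x φ)) - t.2.comp q.ker.subtype = χ}) ≃
      (Σ φ : {φ : B x →+ A // Function.Surjective φ ∧ φ (b x) = a},
        {g : B x →+ E // π.comp g = φ.1 ∧ Function.Surjective g}) :=
    Equiv.sigmaCongrRight fun φ => (cl_fiber q i π s χ φ.1 (s₀ x φ) hi hex hs hχ (hs₀ x φ)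
      hq φ.2.1).some
  rw [Nat.card_congr e1]
  refine Nat.card_eq_of_bijective (fun y => ⟨⟨y.2.1 (b x), ?_⟩, ⟨y.2.1, y.2.2.2, rfl⟩⟩) ⟨?_, ?_⟩
  · rw [← AddMonoidHom.comp_apply, y.2.2.1, y.1.2.2]
  · rintro ⟨⟨φ, hφ⟩, ⟨g, hg, hg'⟩⟩ ⟨⟨φ', hφ'⟩, ⟨g', hg2, hg2'⟩⟩ h
    have hgg : g = g' := by
      have := congrArg (fun z : (Σ e : {e : E // π e = a},
        {f : B x →+ E // Function.Surjective f ∧ f (b x) = e.1}) => z.2.1) h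
      exact this
    subst hgg
    dsimp only at hg hg2
    subst hg
    subst hg2
    rfl
  · rintro ⟨⟨e, he⟩, ⟨g, hg, hg'⟩⟩
    dsimp only at hg'
    subst hg'
    exact ⟨⟨⟨π.comp g, hπ.comp hg, he⟩, ⟨g, rfl, hg⟩⟩, rfl⟩

lemma cl_ker_equiv {F : Type*} [AddCommGroup F] [Module.Free ℤ F] [Module.Finite ℤ F]
    (L : AddSubgroup F) [L.FiniteIndex] : Nonempty (L ≃+ F) := by
  have hfr : Module.finrank ℤ L = Module.finrank ℤ F := AddSubgroup.finrank_eq_of_finiteIndex L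
  have h1 : Module.Free ℤ L :=
    inferInstanceAs (Module.Free ℤ (AddSubgroup.toIntSubmodule L))
  have h2 : Module.Finite ℤ L :=
    inferInstanceAs (Module.Finite ℤ (AddSubgroup.toIntSubmodule L))
  exact ⟨(LinearEquiv.ofFinrankEq L F hfr).toAddEquiv⟩

lemma cl_moment_V {p : ℕ} {X : Type*} (B : X → Type) [∀ x, AddCommGroup (B x)]
    [∀ x, Finite (B x)] (b : ∀ x, B x) (ν : X → ℝ)
    (hmom : ∀ (A : Type) [AddCommGroup A], (∃ n : ℕ, Nat.card A = p ^ n) → ∀ a : A,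
      HasSum (fun x => ν x * (numPointedSur (B x) (b x) A a : ℝ)) (Nat.card A : ℝ)⁻¹)
    {V A : Type} [AddCommGroup V] [AddCommGroup A] [Finite A] [Finite V]
    (hA : ∃ n : ℕ, Nat.card A = p ^ n) (hV : ∃ n : ℕ, Nat.card V = p ^ n) (a : A) :
    HasSum (fun x => ν x * (Nat.card (Σ φ : {φ : B x →+ A // Function.Surjective φ ∧ φ (b x) = a},
      {ψ : φ.1.ker →+ V // Function.Surjective ψ}) : ℝ)) (Nat.card A : ℝ)⁻¹ := by
  let F := A →₀ ℤ
  let q : F →+ A := (Finsupp.linearCombination ℤ (id : A → A)).toAddMonoidHom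
  have hq : Function.Surjective q := Finsupp.linearCombination_id_surjective ℤ A
  have hlift : ∀ x (φ : {φ : B x →+ A // Function.Surjective φ ∧ φ (b x) = a}),
      ∃ s : F →+ B x, ∀ y, φ.1 (s y) = q y := by
    intro x φ
    obtain ⟨h, hh⟩ := Module.projective_lifting_property φ.1.toIntLinearMap q.toIntLinearMap φ.2.1
    exact ⟨h.toAddMonoidHom, fun y => DFunLike.congr_fun hh y⟩
  choose s₀ hs₀ using hlift
  have hZV : Finite (ℤ →+ V) := Finite.of_equiv _ (zmultiplesHom V)
  have hFV : Finite (F →+ V) := Finite.of_equiv _ (Finsupp.liftAddHom (α := A) (M := ℤ) (N := V)).toEquiv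
  obtain ⟨hle⟩ : Nonempty (q.ker ≃+ F) := cl_ker_equiv q.ker
  have hequiv : (q.ker →+ V) ≃ (F →+ V) :=
    { toFun := fun f => f.comp hle.symm.toAddMonoidHom
      invFun := fun f => f.comp hle.toAddMonoidHom
      left_inv := fun f => by ext; simp
      right_inv := fun f => by ext; simp }
  have hKV : Finite (q.ker →+ V) := Finite.of_equiv _ hequiv.symm
  let _ : Fintype (q.ker →+ V) := Fintype.ofFinite _
  have h := hasSum_sum (s := Finset.univ) (fun (χ : q.ker →+ V) _ =>
    cl_moment_chi (p := p) B b ν hmom hA hV a q hq s₀ hs₀ χ)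
  have hne : (Nat.card (F →+ V) : ℝ) ≠ 0 := by exact_mod_cast Nat.card_pos.ne'
  have h2 := h.mul_right (Nat.card (F →+ V) : ℝ)⁻¹
  have hval : (∑ _χ : q.ker →+ V, (Nat.card A : ℝ)⁻¹) * (Nat.card (F →+ V) : ℝ)⁻¹
      = (Nat.card A : ℝ)⁻¹ := by
    rw [Finset.sum_const, Finset.card_univ, ← Nat.card_eq_fintype_card, Nat.card_congr hequiv,
      nsmul_eq_mul]
    field_simp
  rw [hval] at h2
  refine cl_hasSum_congr h2 fun x => ?_
  rw [← Finset.mul_sum, ← Nat.cast_sum, mul_assoc]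
  congr 1
  have hf1 := cl_finite_hom (B x) A
  have hf2 : ∀ φ : {φ : B x →+ A // Function.Surjective φ ∧ φ (b x) = a},
    Finite (φ.1.ker →+ V) := fun φ => cl_finite_hom _ _
  rw [eq_mul_inv_iff_mul_eq₀ hne, ← Nat.cast_mul, ← Nat.card_prod, ← Nat.card_sigma]
  congr 1
  apply Nat.card_congr
  exact
    { toFun := fun y => ⟨y.1.2.1.comp (clRes q y.1.1.1 (s₀ x y.1.1) (hs₀ x y.1.1))
          - y.2.comp q.ker.subtype, y.1.1, ⟨(y.1.2, y.2), rfl⟩⟩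
      invFun := fun z => (⟨z.2.1, z.2.2.1.1⟩, z.2.2.1.2)
      left_inv := fun y => rfl
      right_inv := by
        rintro ⟨χ, φ, ⟨t, rfl⟩⟩
        rfl }

/-! ### Part 5: the partition is determined by the group -/

lemma cl_card_torsion {p : ℕ} (hp : p.Prime) (lam : Multiset ℕ+) (j : ℕ) :
    Nat.card {x : CLGroup p lam // p ^ j • x = 0}
      = p ^ (lam.map (fun n : ℕ+ => min (n : ℕ) j)).sum := by
  have h1 : Nat.card {x : CLGroup p lam // p ^ j • x = 0}
      = Nat.card (∀ i : Fin lam.toList.length,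
          {x : ZMod (p ^ ((lam.toList.get i : ℕ+) : ℕ)) // p ^ j • x = 0}) := by
    apply Nat.card_congr
    refine Equiv.trans (Equiv.subtypeEquivRight fun x => ?_) Equiv.subtypePiEquivPi
    exact funext_iff
  have h2 : ∀ n : ℕ, Nat.card {x : ZMod (p ^ n) // p ^ j • x = 0} = p ^ min n j := by
    intro n
    have : NeZero (p ^ n) := ⟨pow_ne_zero _ hp.ne_zero⟩
    have h := IsAddCyclic.card_nsmulAddMonoidHom_ker (ZMod (p ^ n)) (p ^ j)
    rw [Nat.card_zmod] at h
    have hg : (p ^ n).gcd (p ^ j) = p ^ min n j := by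
      rcases le_total n j with hnj | hnj
      · rw [min_eq_left hnj, Nat.gcd_eq_left (pow_dvd_pow p hnj)]
      · rw [min_eq_right hnj, Nat.gcd_eq_right (pow_dvd_pow p hnj)]
    rw [← hg, ← h]
    rfl
  rw [h1, Nat.card_pi]
  simp_rw [h2]
  rw [Finset.prod_pow_eq_pow_sum]
  congr 1
  conv_rhs => rw [← Multiset.coe_toList lam]
  rw [Multiset.map_coe, Multiset.sum_coe, ← List.sum_ofFn]
  congr 1
  apply List.ext_get <;> simp

lemma cl_count (lam : Multiset ℕ+) (c : ℕ+) :
    (lam.map (fun n : ℕ+ => min (n : ℕ) (c + 1))).sum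
      + (lam.map (fun n : ℕ+ => min (n : ℕ) (c - 1))).sum + lam.count c
      = 2 * (lam.map (fun n : ℕ+ => min (n : ℕ) c)).sum := by
  induction lam using Multiset.induction_on with
  | empty => simp
  | cons n s ih =>
    simp only [Multiset.map_cons, Multiset.sum_cons, Multiset.count_cons]
    have hc := c.pos
    by_cases h : c = n
    · subst h
      simp only [if_true]
      omega
    · have h' : (c : ℕ) ≠ n := fun e => h (PNat.eq e)
      simp only [h, if_false]
      omega

lemma cl_lam_eq {p : ℕ} (hp : p.Prime) {lam mu : Multiset ℕ+}
    (e : CLGroup p lam ≃+ CLGroup p mu) : lam = mu := by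
  have h : ∀ j, (lam.map (fun n : ℕ+ => min (n : ℕ) j)).sum
      = (mu.map (fun n : ℕ+ => min (n : ℕ) j)).sum := by
    intro j
    apply Nat.pow_right_injective hp.two_le
    dsimp only
    rw [← cl_card_torsion hp, ← cl_card_torsion hp]
    apply Nat.card_congr
    refine e.toEquiv.subtypeEquiv fun x => ?_
    simp [← map_nsmul]
  apply Multiset.ext.2
  intro c
  have h1 := cl_count lam c
  have h2 := cl_count mu c
  rw [h, h, h] at h1
  omega

lemma cl_card {p : ℕ} (lam : Multiset ℕ+) :
    ∃ n, Nat.card (CLGroup p lam) = p ^ n := by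
  refine ⟨∑ i : Fin lam.toList.length, ((lam.toList.get i : ℕ+) : ℕ), ?_⟩
  unfold CLGroup
  rw [Nat.card_pi, ← Finset.prod_pow_eq_pow_sum]
  simp

lemma cl_finite {p : ℕ} (hp : p.Prime) (lam : Multiset ℕ+) : Finite (CLGroup p lam) := by
  obtain ⟨n, hn⟩ := cl_card (p := p) lam
  exact Nat.finite_of_card_ne_zero (by rw [hn]; exact pow_ne_zero _ hp.ne_zero)

/-! ### Part 6: conclusion -/

lemma cl_sieve_point {p : ℕ} [hp : Fact p.Prime] (h3 : 3 ≤ p) {B A : Type} [AddCommGroup B]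
    [AddCommGroup A] [Finite B] [Finite A] (hB : ∃ n, Nat.card B = p ^ n) (b : B) (a : A) :
    HasSum (fun k => clW (p : ℝ) k *
        (Nat.card (Σ φ : {φ : B →+ A // Function.Surjective φ ∧ φ b = a},
          {ψ : φ.1.ker →+ (Fin k → ZMod p) // Function.Surjective ψ}) : ℝ))
      (Nat.card {e : B ≃+ A // e b = a} : ℝ) := by
  have hq : (3 : ℝ) ≤ p := by exact_mod_cast h3
  have hf := cl_finite_hom B A
  let _ : Fintype {φ : B →+ A // Function.Surjective φ ∧ φ b = a} := Fintype.ofFinite _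
  have hker : ∀ φ : {φ : B →+ A // Function.Surjective φ ∧ φ b = a},
      ∃ n, Nat.card φ.1.ker = p ^ n := by
    intro φ
    obtain ⟨n, hn⟩ := hB
    have := AddSubgroup.card_addSubgroup_dvd_card φ.1.ker
    rw [hn] at this
    obtain ⟨m, _, hm⟩ := (Nat.dvd_prime_pow hp.out).1 this
    exact ⟨m, hm⟩
  have hφ : ∀ φ : {φ : B →+ A // Function.Surjective φ ∧ φ b = a},
      HasSum (fun k => clW (p : ℝ) k *
        (Nat.card {ψ : φ.1.ker →+ (Fin k → ZMod p) // Function.Surjective ψ} : ℝ))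
        (if Nat.card φ.1.ker = 1 then 1 else 0) := by
    intro φ
    obtain ⟨d, hd, hc⟩ := cl_card_sur (hker φ)
    simp_rw [hc, ← hd]
    exact clW_sieve hq d
  have h := hasSum_sum (s := Finset.univ) (fun φ _ => hφ φ)
  have hval : (∑ φ : {φ : B →+ A // Function.Surjective φ ∧ φ b = a},
      (if Nat.card φ.1.ker = 1 then (1 : ℝ) else 0)) = (Nat.card {e : B ≃+ A // e b = a} : ℝ) := by
    rw [Finset.sum_boole]
    congr 1
    rw [← Fintype.card_subtype, ← Nat.card_eq_fintype_card]
    symm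
    refine Nat.card_eq_of_bijective (fun e => ⟨⟨e.1.toAddMonoidHom, e.1.surjective, e.2⟩, ?_⟩)
      ⟨?_, ?_⟩
    · rw [AddSubgroup.card_eq_one, AddMonoidHom.ker_eq_bot_iff]
      exact e.1.injective
    · intro e e' h
      apply Subtype.ext
      ext x
      exact DFunLike.congr_fun (congrArg (fun z => z.1.1) h) x
    · rintro ⟨⟨φ, hs, hb⟩, hk⟩
      rw [AddSubgroup.card_eq_one, AddMonoidHom.ker_eq_bot_iff] at hk
      exact ⟨⟨AddEquiv.ofBijective φ ⟨hk, hs⟩, hb⟩, rfl⟩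
  rw [hval] at h
  refine cl_hasSum_congr h fun k => ?_
  have hf2 : ∀ φ : {φ : B →+ A // Function.Surjective φ ∧ φ b = a},
    Finite (φ.1.ker →+ (Fin k → ZMod p)) := fun φ => cl_finite_hom _ _
  rw [← Finset.mul_sum, ← Nat.cast_sum, ← Nat.card_sigma]

lemma cl_main_sum {p : ℕ} (hp : p.Prime) (h3 : 3 ≤ p) {X : Type*} (B : X → Type)
    [∀ x, AddCommGroup (B x)] [∀ x, Finite (B x)] (hB : ∀ x, ∃ n, Nat.card (B x) = p ^ n)
    (b : ∀ x, B x) (ν : X → ℝ) (hν : ∀ x, 0 ≤ ν x)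
    (hmom : ∀ (A : Type) [AddCommGroup A], (∃ n : ℕ, Nat.card A = p ^ n) → ∀ a : A,
      HasSum (fun x => ν x * (numPointedSur (B x) (b x) A a : ℝ)) (Nat.card A : ℝ)⁻¹)
    {A : Type} [AddCommGroup A] [Finite A]
    (hA : ∃ n : ℕ, Nat.card A = p ^ n) (a : A) :
    HasSum (fun x => ν x * (Nat.card {e : B x ≃+ A // e (b x) = a} : ℝ))
      (clProd p 0 * (Nat.card A : ℝ)⁻¹) := by
  have : Fact p.Prime := ⟨hp⟩
  have hq : (3 : ℝ) ≤ p := by exact_mod_cast h3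
  have hw : Summable (fun k => |clW (p : ℝ) k|) :=
    Summable.of_nonneg_of_le (fun _ => abs_nonneg _) (fun k => clW_abs_le hq k)
      (summable_geometric_of_lt_one (by norm_num) (by norm_num))
  rw [← clW_euler h3]
  exact cl_swap (fun k x =>
      (Nat.card (Σ φ : {φ : B x →+ A // Function.Surjective φ ∧ φ (b x) = a},
          {ψ : φ.1.ker →+ (Fin k → ZMod p) // Function.Surjective ψ}) : ℝ))
    (fun k => clW (p : ℝ) k) ν (fun x => (Nat.card {e : B x ≃+ A // e (b x) = a} : ℝ))
    (Nat.card A : ℝ)⁻¹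
    (fun k x => mul_nonneg (hν x) (Nat.cast_nonneg _)) hw
    (fun k => cl_moment_V (p := p) B b ν hmom hA ⟨k, by simp⟩ a)
    (fun x => cl_sieve_point h3 (hB x) (b x) a)
/-- Pointed moments determine the pointed Cohen–Lenstra measure: if `ν` is a nonnegative
function on pointed finite abelian `p`-groups `(G_λ, b)` depending only on the isomorphism
class, and all its pointed moments are `1/|A|`, then `ν(λ,b) = μ^0(G_λ)/|G_λ|`, i.e. `ν` is
the pointed Cohen–Lenstra measure. -/
theorem cl_pointed_moments_determine (p : ℕ) (hp : p.Prime) (hodd : Odd p)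
    (ν : (lam : Multiset ℕ+) → CLGroup p lam → ℝ)
    (hν : ∀ lam b, 0 ≤ ν lam b)
    (hinv : ∀ (lam : Multiset ℕ+) (σ : CLGroup p lam ≃+ CLGroup p lam) (b : CLGroup p lam),
      ν lam (σ b) = ν lam b)
    (hmom : ∀ (A : Type) [AddCommGroup A], (∃ n : ℕ, Nat.card A = p ^ n) → ∀ a : A,
      ∑' lam : Multiset ℕ+, ∑' b : CLGroup p lam,
        ν lam b * (numPointedSur (CLGroup p lam) b A a : ℝ)
        = (Nat.card A : ℝ)⁻¹) :
    ∀ (lam : Multiset ℕ+) (b : CLGroup p lam),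
      ν lam b = clMeasure p 0 (CLGroup p lam) / (Nat.card (CLGroup p lam) : ℝ) := by
  have h3 : 3 ≤ p := by
    obtain ⟨m, hm⟩ := hodd
    have := hp.two_le
    omega
  have hfin : ∀ lam, Finite (CLGroup p lam) := fun lam => cl_finite hp lam
  intro lam a
  have hS : ∀ (A : Type) [AddCommGroup A], (∃ n : ℕ, Nat.card A = p ^ n) → ∀ a : A,
      HasSum (fun x : (Σ lam, CLGroup p lam) =>
        ν x.1 x.2 * (numPointedSur (CLGroup p x.1) x.2 A a : ℝ)) (Nat.card A : ℝ)⁻¹ := by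
    intro A _ hA a
    have h := hmom A hA a
    have hne : (Nat.card A : ℝ)⁻¹ ≠ 0 := by
      obtain ⟨n, hn⟩ := hA
      rw [hn]
      have := hp.ne_zero
      positivity
    have hout : Summable (fun lam : Multiset ℕ+ => ∑' b : CLGroup p lam,
        ν lam b * (numPointedSur (CLGroup p lam) b A a : ℝ)) := by
      by_contra hc
      rw [tsum_eq_zero_of_not_summable hc] at h
      exact hne h.symm
    have hs : Summable (fun x : (Σ lam, CLGroup p lam) =>
        ν x.1 x.2 * (numPointedSur (CLGroup p x.1) x.2 A a : ℝ)) := by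
      rw [summable_sigma_of_nonneg (fun x => mul_nonneg (hν _ _) (Nat.cast_nonneg _))]
      exact ⟨fun lam => Summable.of_finite, hout⟩
    rw [← h, ← hs.tsum_sigma]
    exact hs.hasSum
  have hmain := cl_main_sum hp h3 (X := Σ lam, CLGroup p lam) (fun x => CLGroup p x.1)
    (fun x => cl_card x.1) (fun x => x.2) (fun x => ν x.1 x.2) (fun x => hν _ _) hS
    (A := CLGroup p lam) (cl_card lam) a
  have hval := hmain.tsum_eq
  rw [hmain.summable.tsum_sigma, tsum_eq_single lam] at hval
  · let _ : Fintype (CLGroup p lam) := Fintype.ofFinite _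
    have hEf : Finite (CLGroup p lam ≃+ CLGroup p lam) :=
      Finite.of_injective (fun e => (e : CLGroup p lam → CLGroup p lam)) DFunLike.coe_injective
    have hterm : ∀ c : CLGroup p lam,
        ν lam c * (Nat.card {e : CLGroup p lam ≃+ CLGroup p lam // e c = a} : ℝ)
        = ν lam a * (Nat.card {e : CLGroup p lam ≃+ CLGroup p lam // e c = a} : ℝ) := by
      intro c
      rcases isEmpty_or_nonempty {e : CLGroup p lam ≃+ CLGroup p lam // e c = a} with he | ⟨⟨e, he⟩⟩
      · simp
      · rw [← he, hinv]
    have hcard : (∑ c : CLGroup p lam,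
        Nat.card {e : CLGroup p lam ≃+ CLGroup p lam // e c = a}) = numAut (CLGroup p lam) := by
      rw [← Nat.card_sigma]
      unfold numAut
      apply Nat.card_congr
      exact
        { toFun := fun y => y.2.1
          invFun := fun e => ⟨e.symm a, e, by simp⟩
          left_inv := by
            rintro ⟨c, e, rfl⟩
            ext <;> simp
          right_inv := fun e => rfl }
    rw [tsum_fintype, Finset.sum_congr rfl (fun c _ => hterm c), ← Finset.mul_sum,
      ← Nat.cast_sum, hcard] at hval
    have hne : (numAut (CLGroup p lam) : ℝ) ≠ 0 := by
      unfold numAut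
      exact_mod_cast Nat.card_pos.ne'
    unfold clMeasure
    rw [pow_zero, inv_one, one_mul, div_eq_mul_inv, mul_assoc, ← hval]
    field_simp
  · intro mu hmu
    have : ∀ c : CLGroup p mu, IsEmpty {e : CLGroup p mu ≃+ CLGroup p lam // e c = a} :=
      fun c => ⟨fun e => hmu (cl_lam_eq hp e.1)⟩
    simp
end

section
/- For every integer u ≥ 0, the Cohen–Lenstra measure μ^u is a probability measure: the sum over isomorphism classes of finite abelian p-groups A of μ^u(A) equals 1, i.e. ∑_A |A|^{-u} · |Aut(A)|^{-1} · ∏_{k=1}^∞ (1 − p^{-(k+u)}) = 1. -/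
/-!
Cohen–Lenstra moments: for every integer `u ≥ 0` and every finite abelian `p`-group `A`,
the sum over isomorphism classes of finite abelian `p`-groups `B` of `|Sur(B,A)| · μ^u(B)`
equals `|A|^{-u}`.
-/

open scoped Classical

open scoped ENNReal

/-- The sublattice zeta sum. -/
noncomputable def latZeta (p : ℕ) (G : Type) [AddCommGroup G] (s : ℕ) : ℝ≥0∞ :=
  ∑' L : {L : AddSubgroup G // ∃ n, L.index = p ^ n}, ((L.1.index : ℝ≥0∞) ^ s)⁻¹

lemma index_prod_split {G : Type} [AddCommGroup G] (L : AddSubgroup (ℤ × G)) :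
    L.index = (L.comap (AddMonoidHom.inr ℤ G)).index *
      (L.map (AddMonoidHom.fst ℤ G)).index := by
  have hk : (AddMonoidHom.fst ℤ G).ker = (AddMonoidHom.inr ℤ G).range := by
    ext ⟨a, b⟩
    simp only [AddMonoidHom.mem_ker, AddMonoidHom.mem_range, AddMonoidHom.coe_fst,
      AddMonoidHom.inr_apply, Prod.mk.injEq]
    constructor
    · rintro rfl; exact ⟨b, rfl, rfl⟩
    · rintro ⟨_, h, _⟩; exact h.symm
  rw [AddSubgroup.index_comap,
    ← AddSubgroup.index_comap_of_surjective (L.map (AddMonoidHom.fst ℤ G))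
      (f := AddMonoidHom.fst ℤ G) Prod.fst_surjective,
    AddSubgroup.comap_map_eq, hk, ← AddSubgroup.relIndex_sup_right, sup_comm,
    AddSubgroup.relIndex_mul_index le_sup_left]

/-- The lattice built from a sublattice, an exponent and a class. -/
def mkLat {G : Type} [AddCommGroup G] (d : ℤ) (L : AddSubgroup G) (c : G ⧸ L) :
    AddSubgroup (ℤ × G) where
  carrier := {x | ∃ t : ℤ, x.1 = t * d ∧ (QuotientAddGroup.mk x.2 : G ⧸ L) = t • c}
  zero_mem' := ⟨0, by simp⟩
  add_mem' := by
    rintro ⟨a, b⟩ ⟨a', b'⟩ ⟨t, h1, h2⟩ ⟨t', h1', h2'⟩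
    refine ⟨t + t', ?_, ?_⟩
    · simp only [Prod.mk_add_mk] at *; rw [h1, h1']; ring
    · simp only [Prod.mk_add_mk, QuotientAddGroup.mk_add] at *; rw [h2, h2', add_zsmul]
  neg_mem' := by
    rintro ⟨a, b⟩ ⟨t, h1, h2⟩
    refine ⟨-t, ?_, ?_⟩
    · simp only [Prod.neg_mk] at *; rw [h1]; ring
    · simp only [Prod.neg_mk, QuotientAddGroup.mk_neg] at *; rw [h2, neg_zsmul]

lemma mem_mkLat {G : Type} [AddCommGroup G] (d : ℤ) (L : AddSubgroup G) (c : G ⧸ L)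
    (x : ℤ × G) : x ∈ mkLat d L c ↔
      ∃ t : ℤ, x.1 = t * d ∧ (QuotientAddGroup.mk x.2 : G ⧸ L) = t • c := Iff.rfl

lemma mkLat_comap {G : Type} [AddCommGroup G] {d : ℤ} (hd : d ≠ 0) (L : AddSubgroup G)
    (c : G ⧸ L) : (mkLat d L c).comap (AddMonoidHom.inr ℤ G) = L := by
  ext x
  simp only [AddSubgroup.mem_comap, mem_mkLat, AddMonoidHom.inr_apply]
  constructor
  · rintro ⟨t, h1, h2⟩
    have : t = 0 := by
      rcases mul_eq_zero.1 h1.symm with h | h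
      · exact h
      · exact absurd h hd
    subst this
    rw [zero_zsmul] at h2
    exact (QuotientAddGroup.eq_zero_iff x).1 h2
  · intro h
    exact ⟨0, by simp, by rw [zero_zsmul]; exact (QuotientAddGroup.eq_zero_iff x).2 h⟩

lemma mkLat_map {G : Type} [AddCommGroup G] (d : ℤ) (L : AddSubgroup G)
    (c : G ⧸ L) : (mkLat d L c).map (AddMonoidHom.fst ℤ G) = AddSubgroup.zmultiples d := by
  ext a
  simp only [AddSubgroup.mem_map, mem_mkLat, AddSubgroup.mem_zmultiples_iff,
    AddMonoidHom.coe_fst, smul_eq_mul]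
  constructor
  · rintro ⟨x, ⟨t, h1, _⟩, rfl⟩
    exact ⟨t, h1.symm⟩
  · rintro ⟨t, rfl⟩
    obtain ⟨g, hg⟩ := QuotientAddGroup.mk_surjective (t • c)
    exact ⟨(t * d, g), ⟨t, rfl, hg⟩, rfl⟩

lemma mkLat_index {G : Type} [AddCommGroup G] {d : ℤ} (hd : d ≠ 0) (L : AddSubgroup G)
    (c : G ⧸ L) : (mkLat d L c).index = L.index * d.natAbs := by
  rw [index_prod_split, mkLat_comap hd, mkLat_map, Int.index_zmultiples]

lemma mem_mkLat_self {G : Type} [AddCommGroup G] {d : ℤ} (hd : d ≠ 0) (L : AddSubgroup G)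
    (c : G ⧸ L) (g : G) : (d, g) ∈ mkLat d L c ↔ (QuotientAddGroup.mk g : G ⧸ L) = c := by
  rw [mem_mkLat]
  constructor
  · rintro ⟨t, h1, h2⟩
    have : t = 1 := by
      have : (t - 1) * d = 0 := by simp only at h1; linarith
      rcases mul_eq_zero.1 this with h | h
      · linarith
      · exact absurd h hd
    subst this
    simpa using h2
  · intro h
    exact ⟨1, by simp, by simpa using h⟩

lemma eq_mkLat {G : Type} [AddCommGroup G] {d : ℤ} (L : AddSubgroup (ℤ × G))
    (hmap : L.map (AddMonoidHom.fst ℤ G) = AddSubgroup.zmultiples d) (g : G)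
    (hg : (d, g) ∈ L) :
    mkLat d (L.comap (AddMonoidHom.inr ℤ G)) (QuotientAddGroup.mk g) = L := by
  have key : ∀ (t : ℤ) (b : G), (t * d, b) ∈ L ↔
      (QuotientAddGroup.mk b : G ⧸ (L.comap (AddMonoidHom.inr ℤ G))) =
        t • (QuotientAddGroup.mk g : G ⧸ (L.comap (AddMonoidHom.inr ℤ G))) := by
    intro t b
    have h1 : t • (QuotientAddGroup.mk g : G ⧸ (L.comap (AddMonoidHom.inr ℤ G))) =
      QuotientAddGroup.mk (t • g) := rfl
    have h2 : ((t * d, b) : ℤ × G) = t • (d, g) + (0, -(t • g) + b) := by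
      ext <;> simp
    rw [h1, eq_comm, QuotientAddGroup.eq, AddSubgroup.mem_comap, h2]
    exact L.add_mem_cancel_left (L.zsmul_mem hg t)
  ext ⟨a, b⟩
  rw [mem_mkLat]
  constructor
  · rintro ⟨t, h1, h2⟩
    simp only at h1 h2
    subst h1
    exact (key t b).2 h2
  · intro h
    have : a ∈ L.map (AddMonoidHom.fst ℤ G) := ⟨(a, b), h, rfl⟩
    rw [hmap, AddSubgroup.mem_zmultiples_iff] at this
    obtain ⟨t, rfl⟩ := this
    exact ⟨t, rfl, (key t b).1 h⟩

/-- Parametrisation of sublattices of `ℤ × G`. -/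
noncomputable def latMap (p : ℕ) (hp : p.Prime) (G : Type) [AddCommGroup G] :
    (Σ L : {L : AddSubgroup G // ∃ n, L.index = p ^ n}, Σ _ : ℕ, G ⧸ L.1) →
      {L : AddSubgroup (ℤ × G) // ∃ n, L.index = p ^ n} :=
  fun x => ⟨mkLat ((p : ℤ) ^ x.2.1) x.1.1 x.2.2, by
    obtain ⟨n, hn⟩ := x.1.2
    refine ⟨n + x.2.1, ?_⟩
    rw [mkLat_index (pow_ne_zero _ (by exact_mod_cast hp.ne_zero)), hn, pow_add]
    simp [Int.natAbs_pow]⟩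

lemma latMap_bij (p : ℕ) (hp : p.Prime) (G : Type) [AddCommGroup G] :
    Function.Bijective (latMap p hp G) := by
  have hne : ∀ m : ℕ, (p : ℤ) ^ m ≠ 0 := fun m => pow_ne_zero _ (by exact_mod_cast hp.ne_zero)
  constructor
  · rintro ⟨⟨L, hL⟩, m, c⟩ ⟨⟨L', hL'⟩, m', c'⟩ h
    have h : mkLat ((p : ℤ) ^ m) L c = mkLat ((p : ℤ) ^ m') L' c' := congrArg Subtype.val h
    have h1 : L = L' := by
      rw [← mkLat_comap (hne m) L c, h, mkLat_comap (hne m')]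
    subst h1
    have h2 : m = m' := by
      have h3 := congrArg (fun M => (AddSubgroup.map (AddMonoidHom.fst ℤ G) M).index) h
      simp only [mkLat_map, Int.index_zmultiples, Int.natAbs_pow, Int.natAbs_natCast] at h3
      exact Nat.pow_right_injective hp.two_le h3
    subst h2
    have h3 : c = c' := by
      obtain ⟨g, rfl⟩ := QuotientAddGroup.mk_surjective c
      rw [← mem_mkLat_self (hne m), ← h, mem_mkLat_self (hne m)]
    subst h3
    rfl
  · rintro ⟨L, n, hn⟩
    have hs := index_prod_split L
    rw [hn] at hs
    obtain ⟨n1, -, h1⟩ := (Nat.dvd_prime_pow hp).1 (Dvd.intro _ hs.symm)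
    obtain ⟨m, -, h2⟩ := (Nat.dvd_prime_pow hp).1 (Dvd.intro_left _ hs.symm)
    obtain ⟨a, ha⟩ := Int.subgroup_cyclic (L.map (AddMonoidHom.fst ℤ G))
    rw [← AddSubgroup.zmultiples_eq_closure] at ha
    have ha' : L.map (AddMonoidHom.fst ℤ G) = AddSubgroup.zmultiples ((p : ℤ) ^ m) := by
      rw [ha, Int.index_zmultiples] at h2
      rw [ha, ← Int.zmultiples_natAbs, h2]
      push_cast
      rfl
    have : (p : ℤ) ^ m ∈ L.map (AddMonoidHom.fst ℤ G) := by
      rw [ha']; exact AddSubgroup.mem_zmultiples _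
    obtain ⟨⟨b, g⟩, hg, hb⟩ := this
    simp only [AddMonoidHom.coe_fst] at hb
    subst hb
    exact ⟨⟨⟨_, n1, h1⟩, m, QuotientAddGroup.mk g⟩, Subtype.ext (eq_mkLat L ha' g hg)⟩

lemma latZeta_prod (p : ℕ) (hp : p.Prime) (G : Type) [AddCommGroup G] (s : ℕ) :
    latZeta p (ℤ × G) (s + 1) = latZeta p G s * (1 - ((p : ℝ≥0∞) ^ (s + 1))⁻¹)⁻¹ := by
  have hne : ∀ m : ℕ, (p : ℤ) ^ m ≠ 0 := fun m => pow_ne_zero _ (by exact_mod_cast hp.ne_zero)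
  unfold latZeta
  rw [← (Equiv.ofBijective _ (latMap_bij p hp G)).tsum_eq, ENNReal.tsum_sigma',
    ← ENNReal.tsum_mul_right]
  refine tsum_congr fun L => ?_
  rw [ENNReal.tsum_sigma', ← ENNReal.tsum_geometric, ← ENNReal.tsum_mul_left]
  refine tsum_congr fun m => ?_
  obtain ⟨n, hn⟩ := L.2
  have hc : (ENat.card (G ⧸ L.1) : ℝ≥0∞) = (L.1.index : ℝ≥0∞) := by
    have h0 : L.1.index ≠ 0 := by rw [hn]; exact pow_ne_zero _ hp.ne_zero
    have : L.1.FiniteIndex := ⟨h0⟩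
    have : Finite (G ⧸ L.1) := AddSubgroup.finite_quotient_of_finiteIndex
    rw [ENat.card_eq_coe_natCard]
    rfl
  have hi : ∀ c, (((latMap p hp G ⟨L, m, c⟩).1.index : ℕ) : ℝ≥0∞) =
      (p : ℝ≥0∞) ^ n * (p : ℝ≥0∞) ^ m := by
    intro c
    have := mkLat_index (hne m) L.1 c
    simp only [latMap]
    rw [this, hn]
    simp [Int.natAbs_pow]
  simp only [Equiv.ofBijective_apply, hi]
  rw [ENNReal.tsum_const, hc, hn]
  have hp0 : (p : ℝ≥0∞) ≠ 0 := by exact_mod_cast hp.ne_zero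
  have hpt : (p : ℝ≥0∞) ≠ ⊤ := ENNReal.natCast_ne_top p
  push_cast
  rw [mul_pow, ENNReal.mul_inv (by simp [hp0]) (by simp [hpt]), pow_succ ((p : ℝ≥0∞) ^ n),
    ENNReal.mul_inv (by simp [hp0]) (by simp [hpt]), ← ENNReal.inv_pow, ← pow_mul (p : ℝ≥0∞) m,
    mul_comm m, pow_mul (p : ℝ≥0∞) (s + 1) m]
  have := ENNReal.mul_inv_cancel (a := (p : ℝ≥0∞) ^ n) (by simp [hp0]) (by simp [hpt])
  rw [mul_assoc, mul_left_comm, ← mul_assoc ((p : ℝ≥0∞) ^ n), this, one_mul, ENNReal.inv_pow]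

lemma latZeta_congr (p : ℕ) {G H : Type} [AddCommGroup G] [AddCommGroup H] (e : G ≃+ H) (s : ℕ) :
    latZeta p G s = latZeta p H s := by
  have hi : ∀ L : AddSubgroup G, (L.map e.toAddMonoidHom).index = L.index := by
    intro L
    exact AddSubgroup.index_map_equiv L e
  let f : {L : AddSubgroup G // ∃ n, L.index = p ^ n} ≃
      {L : AddSubgroup H // ∃ n, L.index = p ^ n} :=
    e.mapAddSubgroup.toEquiv.subtypeEquiv fun L => by
      have := hi L
      simp only [RelIso.coe_fn_toEquiv, AddEquiv.mapAddSubgroup_apply] at this ⊢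
      rw [← this]; rfl
  unfold latZeta
  rw [← f.tsum_eq]
  refine tsum_congr fun L => ?_
  have : (f L).1.index = L.1.index := hi L.1
  rw [this]

lemma latZeta_pi (p : ℕ) (hp : p.Prime) (u k : ℕ) :
    latZeta p (Fin k → ℤ) (k + u) =
      ∏ j ∈ Finset.range k, (1 - ((p : ℝ≥0∞) ^ (j + 1 + u))⁻¹)⁻¹ := by
  induction k with
  | zero =>
    have h1 : ∀ L : AddSubgroup (Fin 0 → ℤ), L.index = 1 := by
      intro L
      rw [AddSubgroup.index_eq_one]
      exact Subsingleton.elim _ _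
    have : Unique {L : AddSubgroup (Fin 0 → ℤ) // ∃ n, L.index = p ^ n} :=
      { default := ⟨⊤, 0, by simp⟩
        uniq := fun L => Subtype.ext (Subsingleton.elim _ _) }
    unfold latZeta
    simp [h1]
  | succ k ih =>
    rw [Finset.prod_range_succ, ← ih,
      ← latZeta_congr p (Fin.consLinearEquiv ℤ (fun _ : Fin (k + 1) => ℤ)).toAddEquiv,
      show k + 1 + u = (k + u) + 1 by ring, latZeta_prod p hp]

lemma clg_univ (lam : Multiset ℕ+) :
    (Finset.univ : Finset (Fin lam.toList.length)).val.map (fun i => lam.toList.get i) = lam := by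
  rw [Fin.univ_val_map, List.ofFn_get, Multiset.coe_toList]

lemma clg_prod (lam : Multiset ℕ+) (f : ℕ+ → ℕ) :
    ∏ i : Fin lam.toList.length, f (lam.toList.get i) = (lam.map f).prod := by
  conv_rhs => rw [← clg_univ lam]
  rw [Multiset.map_map]
  rfl

lemma clg_pow (p : ℕ) (lam : Multiset ℕ+) (f : ℕ+ → ℕ) :
    (lam.map (fun a : ℕ+ => p ^ f a)).prod = p ^ (lam.map f).sum := by
  induction lam using Multiset.induction with
  | empty => simp
  | cons a s ih => simp [ih, pow_add]

instance clg_finite (p : ℕ) [NeZero p] (lam : Multiset ℕ+) : Finite (CLGroup p lam) := by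
  delta CLGroup; infer_instance

lemma clg_card (p : ℕ) (lam : Multiset ℕ+) :
    Nat.card (CLGroup p lam) = p ^ (lam.map (fun a : ℕ+ => (a : ℕ))).sum := by
  have : Nat.card (CLGroup p lam) =
    ∏ i : Fin lam.toList.length, p ^ ((lam.toList.get i : ℕ+) : ℕ) := by
    unfold CLGroup
    rw [Nat.card_pi]
    simp
  rw [this, clg_prod lam (fun a : ℕ+ => p ^ (a : ℕ)), clg_pow]

lemma clg_torsion (p : ℕ) (hp : p.Prime) (lam : Multiset ℕ+) (j : ℕ) :
    Nat.card {x : CLGroup p lam // p ^ j • x = 0} = p ^ (lam.map (fun a : ℕ+ => min (a : ℕ) j)).sum := by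
  have : NeZero p := ⟨hp.ne_zero⟩
  let e : {x : CLGroup p lam // p ^ j • x = 0} ≃
    ∀ i : Fin lam.toList.length, {y : ZMod (p ^ ((lam.toList.get i : ℕ+) : ℕ)) // p ^ j • y = 0} :=
    { toFun := fun x i => ⟨x.1 i, congrFun x.2 i⟩
      invFun := fun y => ⟨fun i => (y i).1, funext fun i => (y i).2⟩
      left_inv := fun x => rfl
      right_inv := fun y => rfl }
  have hz : ∀ a : ℕ, Nat.card {y : ZMod (p ^ a) // p ^ j • y = 0} = p ^ min a j := by
    intro a
    have := IsAddCyclic.card_nsmulAddMonoidHom_ker (ZMod (p ^ a)) (p ^ j)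
    rw [Nat.card_zmod] at this
    have h2 : (p ^ a).gcd (p ^ j) = p ^ min a j := by
      rcases le_total a j with h | h
      · rw [min_eq_left h, Nat.gcd_eq_left (pow_dvd_pow p h)]
      · rw [min_eq_right h, Nat.gcd_eq_right (pow_dvd_pow p h)]
    rw [← h2, ← this]
    rfl
  rw [Nat.card_congr e, Nat.card_pi]
  simp only [hz]
  rw [clg_prod lam (fun a : ℕ+ => p ^ (min (a : ℕ) j)), clg_pow]

lemma clg_min_sum (lam : Multiset ℕ+) (j : ℕ) :
    (lam.map (fun a : ℕ+ => min (a : ℕ) (j + 1))).sum =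
      (lam.map (fun a : ℕ+ => min (a : ℕ) j)).sum + lam.countP (fun a : ℕ+ => j + 1 ≤ (a : ℕ)) := by
  induction lam using Multiset.induction with
  | empty => simp
  | cons a s ih =>
    simp only [Multiset.map_cons, Multiset.sum_cons, Multiset.countP_cons, ih]
    split_ifs <;> omega

lemma clg_count (lam : Multiset ℕ+) (a : ℕ+) :
    lam.countP (fun b : ℕ+ => (a : ℕ) ≤ (b : ℕ)) =
      lam.count a + lam.countP (fun b : ℕ+ => (a : ℕ) + 1 ≤ (b : ℕ)) := by
  induction lam using Multiset.induction with
  | empty => simp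
  | cons b s ih =>
    simp only [Multiset.countP_cons, Multiset.count_cons, ih]
    have : a = b ↔ (a : ℕ) = b := by rw [PNat.coe_inj]
    simp only [this]
    split_ifs <;> omega

lemma clg_unique (p : ℕ) (hp : p.Prime) (lam mu : Multiset ℕ+)
    (e : CLGroup p lam ≃+ CLGroup p mu) : lam = mu := by
  have h1 : ∀ j, (lam.map (fun a : ℕ+ => min (a : ℕ) j)).sum = (mu.map (fun a : ℕ+ => min (a : ℕ) j)).sum := by
    intro j
    apply Nat.pow_right_injective hp.two_le
    simp only
    rw [← clg_torsion p hp, ← clg_torsion p hp]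
    refine Nat.card_congr (e.toEquiv.subtypeEquiv fun x => ?_)
    rw [AddEquiv.toEquiv_eq_coe, AddEquiv.coe_toEquiv, ← map_nsmul, map_eq_zero_iff e e.injective]
  have h2 : ∀ j, lam.countP (fun a : ℕ+ => j + 1 ≤ (a : ℕ)) = mu.countP (fun a : ℕ+ => j + 1 ≤ (a : ℕ)) := by
    intro j
    have := clg_min_sum lam j
    rw [h1, h1, clg_min_sum mu j] at this
    omega
  ext a
  have h3 := clg_count lam a
  have h4 := clg_count mu a
  have h5 := h2 a
  have h6 := h2 ((a : ℕ) - 1)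
  have h7 : (a : ℕ) - 1 + 1 = a := Nat.sub_add_cancel a.2
  rw [h7] at h6
  omega

lemma clg_exists (p : ℕ) (hp : p.Prime) (A : Type) [AddCommGroup A] (n : ℕ)
    (hA : Nat.card A = p ^ n) : ∃ lam : Multiset ℕ+, Nonempty (A ≃+ CLGroup p lam) := by
  have : Finite A := Nat.finite_of_card_ne_zero (by rw [hA]; exact pow_ne_zero _ hp.ne_zero)
  obtain ⟨ι, hι, m, hm, ⟨e⟩⟩ := AddCommGroup.equiv_directSum_zmod_of_finite' A
  have e2 : A ≃+ ∀ i, ZMod (m i) := e.trans (DirectSum.addEquivProd _)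
  have hc : p ^ n = ∏ i, m i := by
    rw [← hA, Nat.card_congr e2.toEquiv, Nat.card_pi]; simp
  have h1 : ∀ i, ∃ a : ℕ+, m i = p ^ (a : ℕ) := by
    intro i
    have : m i ∣ p ^ n := hc ▸ Finset.dvd_prod_of_mem m (Finset.mem_univ i)
    obtain ⟨k, -, hk⟩ := (Nat.dvd_prime_pow hp).1 this
    have : k ≠ 0 := by
      rintro rfl
      have := hm i
      simp [hk] at this
    exact ⟨⟨k, Nat.pos_of_ne_zero this⟩, hk⟩
  choose a ha using h1
  have hma : m = fun i => p ^ (a i : ℕ) := funext ha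
  subst hma
  let lam : Multiset ℕ+ := (Finset.univ : Finset ι).val.map a
  refine ⟨lam, ⟨?_⟩⟩
  have hf : ∀ c : ℕ+, Nonempty ({i // lam.toList.get i = c} ≃ {i // a i = c}) := by
    intro c
    refine ⟨Fintype.equivOfCardEq ?_⟩
    have h := congrArg (Multiset.count c) (clg_univ lam)
    simp only [lam, Multiset.count_map] at h
    rw [Fintype.card_subtype, Fintype.card_subtype]
    simp only [eq_comm (b := c)]
    exact h
  let σ := Equiv.ofFiberEquiv fun c => (hf c).some
  have hσ : ∀ i, a (σ i) = lam.toList.get i := Equiv.ofFiberEquiv_map _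
  have e3 : (∀ i, ZMod (p ^ (a (σ i) : ℕ))) ≃+ ∀ i, ZMod (p ^ (a i : ℕ)) :=
    (RingEquiv.piCongrLeft (fun i => ZMod (p ^ (a i : ℕ))) σ).toAddEquiv
  have h4 : (fun i => ZMod (p ^ (a (σ i) : ℕ))) =
      fun i => ZMod (p ^ ((lam.toList.get i : ℕ+) : ℕ)) := by
    funext i; rw [hσ]
  have e5 : (∀ i, ZMod (p ^ (a (σ i) : ℕ))) ≃+ CLGroup p lam := by
    unfold CLGroup
    exact AddEquiv.piCongrRight fun i =>
      (ZMod.ringEquivCongr (by rw [hσ])).toAddEquiv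
  exact e2.trans (e3.symm.trans e5)

/-- Surjections are pairs of a kernel and an isomorphism. -/
noncomputable def surEquiv (G A : Type) [AddCommGroup G] [AddCommGroup A] :
    (Σ L : {L : AddSubgroup G // Nonempty (G ⧸ L ≃+ A)}, (G ⧸ L.1 ≃+ A)) ≃
      {f : G →+ A // Function.Surjective f} :=
  Equiv.ofBijective
    (fun x => ⟨(x.2 : G ⧸ x.1.1 →+ A).comp (QuotientAddGroup.mk' x.1.1),
      x.2.surjective.comp QuotientAddGroup.mk_surjective⟩) (by
    have hk : ∀ (L : AddSubgroup G) (e : G ⧸ L ≃+ A),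
        ((e : G ⧸ L →+ A).comp (QuotientAddGroup.mk' L)).ker = L := by
      intro L e
      ext x
      simp
    constructor
    · rintro ⟨⟨L, hL⟩, e⟩ ⟨⟨L', hL'⟩, e'⟩ h
      have h := congrArg Subtype.val h
      simp only at h
      have h1 : L = L' := by rw [← hk L e, h, hk]
      subst h1
      have h2 : e = e' := by
        ext x
        obtain ⟨g, rfl⟩ := QuotientAddGroup.mk_surjective x
        exact DFunLike.congr_fun h g
      subst h2
      rfl
    · rintro ⟨f, hf⟩
      refine ⟨⟨⟨f.ker, ⟨QuotientAddGroup.quotientKerEquivOfSurjective f hf⟩⟩,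
        QuotientAddGroup.quotientKerEquivOfSurjective f hf⟩, ?_⟩
      ext x
      rfl)

lemma numSur_eq (G A : Type) [AddCommGroup G] [AddCommGroup A] :
    numSur G A = Nat.card {L : AddSubgroup G // Nonempty (G ⧸ L ≃+ A)} * numAut A := by
  unfold numSur numAut
  rw [← Nat.card_prod, ← Nat.card_congr (surEquiv G A)]
  refine Nat.card_congr ((Equiv.sigmaCongrRight fun L => ?_).trans (Equiv.sigmaEquivProd _ _))
  exact
    { toFun := fun e => L.2.some.symm.trans e
      invFun := fun e => L.2.some.trans e
      left_inv := fun e => by ext; simp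
      right_inv := fun e => by ext; simp }

/-- Homomorphisms out of `ℤ^k`. -/
noncomputable def homEquiv (k : ℕ) (A : Type) [AddCommGroup A] :
    (Fin k → A) ≃ ((Fin k → ℤ) →+ A) :=
  ((Pi.basisFun ℤ (Fin k)).constr ℤ).toEquiv.trans (addMonoidHomLequivInt ℤ).symm.toEquiv

lemma numAut_pos (A : Type) [AddCommGroup A] [Finite A] : numAut A ≠ 0 := by
  unfold numAut
  have : Finite (A ≃+ A) := Finite.of_injective (fun e => (e : A → A)) DFunLike.coe_injective
  have : Nonempty (A ≃+ A) := ⟨AddEquiv.refl A⟩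
  exact Nat.card_ne_zero.2 ⟨inferInstance, inferInstance⟩

lemma sum_sur (p : ℕ) (hp : p.Prime) (k s : ℕ) :
    ∑' lam : Multiset ℕ+, (numSur (Fin k → ℤ) (CLGroup p lam) : ℝ≥0∞) *
      (numAut (CLGroup p lam) : ℝ≥0∞)⁻¹ * ((Nat.card (CLGroup p lam) : ℝ≥0∞) ^ s)⁻¹ =
      latZeta p (Fin k → ℤ) s := by
  have : NeZero p := ⟨hp.ne_zero⟩
  let F : (Σ lam : Multiset ℕ+, {L : AddSubgroup (Fin k → ℤ) //
      Nonempty ((Fin k → ℤ) ⧸ L ≃+ CLGroup p lam)}) →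
      {L : AddSubgroup (Fin k → ℤ) // ∃ n, L.index = p ^ n} :=
    fun x => ⟨x.2.1, _, (Nat.card_congr x.2.2.some.toEquiv).trans (clg_card p x.1)⟩
  have hF : Function.Bijective F := by
    constructor
    · rintro ⟨lam, L, ⟨e⟩⟩ ⟨mu, L', ⟨e'⟩⟩ h
      have h : L = L' := congrArg Subtype.val h
      subst h
      obtain rfl := clg_unique p hp lam mu (e.symm.trans e')
      rfl
    · rintro ⟨L, n, hn⟩
      obtain ⟨lam, h⟩ := clg_exists p hp ((Fin k → ℤ) ⧸ L) n hn
      exact ⟨⟨lam, L, h⟩, rfl⟩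
  unfold latZeta
  rw [← (Equiv.ofBijective F hF).tsum_eq, ENNReal.tsum_sigma']
  refine tsum_congr fun lam => ?_
  have hc : ∀ L, ((Equiv.ofBijective F hF ⟨lam, L⟩).1.index) = Nat.card (CLGroup p lam) :=
    fun L => Nat.card_congr L.2.some.toEquiv
  simp only [hc]
  rw [ENNReal.tsum_const, numSur_eq]
  have hfin : Finite {L : AddSubgroup (Fin k → ℤ) //
      Nonempty ((Fin k → ℤ) ⧸ L ≃+ CLGroup p lam)} := by
    have : Finite ((Fin k → ℤ) →+ CLGroup p lam) := Finite.of_equiv _ (homEquiv k _)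
    have := Finite.of_equiv _ (surEquiv (Fin k → ℤ) (CLGroup p lam)).symm
    exact Finite.of_surjective (fun x : (Σ L : {L : AddSubgroup (Fin k → ℤ) //
      Nonempty ((Fin k → ℤ) ⧸ L ≃+ CLGroup p lam)}, ((Fin k → ℤ) ⧸ L.1 ≃+ CLGroup p lam)) => x.1)
      fun L => ⟨⟨L, L.2.some⟩, rfl⟩
  rw [ENat.card_eq_coe_natCard]
  push_cast
  rw [mul_assoc (Nat.card _ : ℝ≥0∞), ENNReal.mul_inv_cancel, mul_one]
  · exact_mod_cast numAut_pos _
  · exact ENNReal.natCast_ne_top _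

lemma hom_card (k : ℕ) (A : Type) [AddCommGroup A] :
    Nat.card ((Fin k → ℤ) →+ A) = Nat.card A ^ k := by
  rw [← Nat.card_congr (homEquiv k A), Nat.card_fun, Nat.card_fin]

lemma numSur_le (k : ℕ) (A : Type) [AddCommGroup A] [Finite A] :
    numSur (Fin k → ℤ) A ≤ Nat.card A ^ k := by
  have : Finite ((Fin k → ℤ) →+ A) := Finite.of_equiv _ (homEquiv k A)
  rw [← hom_card]
  exact Nat.card_le_card_of_injective _ Subtype.val_injective

lemma le_numSur (k : ℕ) (A : Type) [AddCommGroup A] [Finite A] :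
    Nat.card A ^ k ≤ numSur (Fin k → ℤ) A +
      ∑ᶠ H : {H : AddSubgroup A // H ≠ ⊤}, Nat.card H.1 ^ k := by
  have hf : ∀ (B : Type) [AddCommGroup B] [Finite B], Finite ((Fin k → ℤ) →+ B) :=
    fun B _ _ => Finite.of_equiv _ (homEquiv k B)
  have := hf A
  have : Finite (AddSubgroup A) := Finite.of_injective (fun H => (H : Set A)) SetLike.coe_injective
  have := fun H : {H : AddSubgroup A // H ≠ ⊤} => hf H.1
  have : Fintype {H : AddSubgroup A // H ≠ ⊤} := Fintype.ofFinite _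
  rw [finsum_eq_sum_of_fintype]
  simp only [← hom_card]
  unfold numSur
  rw [← Nat.card_sigma, ← Nat.card_sum]
  let F : {f : (Fin k → ℤ) →+ A // Function.Surjective f} ⊕
      (Σ H : {H : AddSubgroup A // H ≠ ⊤}, ((Fin k → ℤ) →+ H.1)) → ((Fin k → ℤ) →+ A) :=
    Sum.elim (fun f => f.1) (fun x => x.1.1.subtype.comp x.2)
  refine Nat.card_le_card_of_surjective F fun f => ?_
  by_cases h : Function.Surjective f
  · exact ⟨Sum.inl ⟨f, h⟩, rfl⟩
  · refine ⟨Sum.inr ⟨⟨f.range, fun h' => h (AddMonoidHom.range_eq_top.1 h')⟩, f.rangeRestrict⟩, ?_⟩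
    ext x
    rfl

lemma tendsto_sur (A : Type) [AddCommGroup A] [Finite A] :
    Filter.Tendsto (fun k : ℕ => (numSur (Fin k → ℤ) A : ℝ) / (Nat.card A : ℝ) ^ k)
      Filter.atTop (nhds 1) := by
  have : Finite (AddSubgroup A) := Finite.of_injective (fun H => (H : Set A)) SetLike.coe_injective
  have : Fintype {H : AddSubgroup A // H ≠ ⊤} := Fintype.ofFinite _
  have hA : (0 : ℝ) < Nat.card A := by exact_mod_cast Nat.card_pos
  have hlim : Filter.Tendsto (fun k : ℕ => 1 - ∑ H : {H : AddSubgroup A // H ≠ ⊤},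
      ((Nat.card H.1 : ℝ) / Nat.card A) ^ k) Filter.atTop (nhds (1 - ∑ H : {H : AddSubgroup A // H ≠ ⊤}, 0)) := by
    refine tendsto_const_nhds.sub (tendsto_finsetSum _ fun H _ => ?_)
    refine tendsto_pow_atTop_nhds_zero_of_lt_one (by positivity) ?_
    rw [div_lt_one hA]
    have h1 : Nat.card H.1 ≤ Nat.card A := Nat.card_le_card_of_injective _ Subtype.val_injective
    have h2 : Nat.card H.1 ≠ Nat.card A := fun h => H.2 (AddSubgroup.eq_top_of_card_eq _ h)
    exact_mod_cast lt_of_le_of_ne h1 h2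
  simp only [Finset.sum_const_zero, sub_zero] at hlim
  refine tendsto_of_tendsto_of_tendsto_of_le_of_le hlim tendsto_const_nhds ?_ ?_
  · intro k
    have h := le_numSur k A
    rw [finsum_eq_sum_of_fintype] at h
    have h : (Nat.card A : ℝ) ^ k ≤ numSur (Fin k → ℤ) A +
      ∑ H : {H : AddSubgroup A // H ≠ ⊤}, (Nat.card H.1 : ℝ) ^ k := by exact_mod_cast h
    simp only [div_pow]
    rw [← Finset.sum_div, le_div_iff₀ (by positivity), sub_mul, div_mul_cancel₀ _ (by positivity)]
    linarith
  · intro k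
    simp only
    rw [div_le_one (by positivity)]
    exact_mod_cast numSur_le k A

lemma cl_factor_pos (p : ℕ) (hp : p.Prime) (u j : ℕ) :
    (0 : ℝ) < 1 - (p : ℝ) ^ (-((j : ℤ) + 1 + u)) := by
  have h1 : (1 : ℝ) < p := by exact_mod_cast hp.one_lt
  have := zpow_lt_one_of_neg₀ h1 (n := -((j : ℤ) + 1 + u)) (by omega)
  linarith

lemma cl_summable (p : ℕ) (hp : p.Prime) (u : ℕ) :
    Summable fun k : ℕ => ‖-(p : ℝ) ^ (-((k : ℤ) + 1 + u))‖ := by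
  have h1 : (1 : ℝ) < p := by exact_mod_cast hp.one_lt
  have h0 : (p : ℝ) ≠ 0 := by positivity
  have : (fun k : ℕ => ‖-(p : ℝ) ^ (-((k : ℤ) + 1 + u))‖) =
      fun k : ℕ => ((p : ℝ)⁻¹) ^ (1 + u) * ((p : ℝ)⁻¹) ^ k := by
    funext k
    rw [norm_neg, Real.norm_of_nonneg (by positivity), ← pow_add, zpow_neg, inv_pow]
    congr 1
    rw [← zpow_natCast]
    congr 1
    push_cast
    ring
  rw [this]
  exact (summable_geometric_of_lt_one (by positivity) (inv_lt_one_of_one_lt₀ h1)).mul_left _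

lemma clProd_tendsto (p : ℕ) (hp : p.Prime) (u : ℕ) :
    Filter.Tendsto (fun k : ℕ => ∏ j ∈ Finset.range k, (1 - (p : ℝ) ^ (-((j : ℤ) + 1 + u))))
      Filter.atTop (nhds (clProd p u)) := by
  have := (multipliable_one_add_of_summable (cl_summable p hp u)).hasProd.tendsto_prod_nat
  simp only [← sub_eq_add_neg] at this
  exact this

lemma clProd_ne (p : ℕ) (hp : p.Prime) (u : ℕ) : clProd p u ≠ 0 := by
  have := tprod_one_add_ne_zero_of_summable (f := fun k : ℕ => -(p : ℝ) ^ (-((k : ℤ) + 1 + u)))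
    (fun j => by
      have := cl_factor_pos p hp u j
      rw [← sub_eq_add_neg]; exact this.ne') (cl_summable p hp u)
  simp only [← sub_eq_add_neg] at this
  exact this

lemma clProd_pos (p : ℕ) (hp : p.Prime) (u : ℕ) : 0 < clProd p u :=
  lt_of_le_of_ne (ge_of_tendsto' (clProd_tendsto p hp u) fun k =>
    Finset.prod_nonneg fun j _ => (cl_factor_pos p hp u j).le) (clProd_ne p hp u).symm

lemma latZeta_pi_real (p : ℕ) (hp : p.Prime) (u k : ℕ) :
    latZeta p (Fin k → ℤ) (k + u) = ENNReal.ofReal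
      (∏ j ∈ Finset.range k, (1 - (p : ℝ) ^ (-((j : ℤ) + 1 + u))))⁻¹ := by
  rw [latZeta_pi p hp, ← Finset.prod_inv_distrib,
    ENNReal.ofReal_prod_of_nonneg fun j _ => inv_nonneg.2 (cl_factor_pos p hp u j).le]
  refine Finset.prod_congr rfl fun j _ => ?_
  have h0 : (0 : ℝ) < p := by exact_mod_cast hp.pos
  have h1 : (p : ℝ) ^ (-((j : ℤ) + 1 + u)) = ((p : ℝ) ^ (j + 1 + u))⁻¹ := by
    rw [zpow_neg, ← zpow_natCast]; push_cast; rfl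
  rw [ENNReal.ofReal_inv_of_pos (cl_factor_pos p hp u j), h1,
    ENNReal.ofReal_sub _ (by positivity), ENNReal.ofReal_one,
    ENNReal.ofReal_inv_of_pos (by positivity), ENNReal.ofReal_pow h0.le, ENNReal.ofReal_natCast]

lemma cl_total (p : ℕ) (hp : p.Prime) (u : ℕ) :
    ∑' lam : Multiset ℕ+, ENNReal.ofReal (((Nat.card (CLGroup p lam) : ℝ) ^ u)⁻¹ *
      (numAut (CLGroup p lam) : ℝ)⁻¹) = ENNReal.ofReal (clProd p u)⁻¹ := by
  have : NeZero p := ⟨hp.ne_zero⟩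
  have hT : Filter.Tendsto (fun k : ℕ => latZeta p (Fin k → ℤ) (k + u)) Filter.atTop
      (nhds (ENNReal.ofReal (clProd p u)⁻¹)) := by
    simp only [latZeta_pi_real p hp]
    exact ENNReal.tendsto_ofReal ((clProd_tendsto p hp u).inv₀ (clProd_ne p hp u))
  set f : Multiset ℕ+ → ℝ := fun lam => ((Nat.card (CLGroup p lam) : ℝ) ^ u)⁻¹ *
      (numAut (CLGroup p lam) : ℝ)⁻¹ with hf
  set r : ℕ → Multiset ℕ+ → ℝ := fun k lam =>
    (numSur (Fin k → ℤ) (CLGroup p lam) : ℝ) / (Nat.card (CLGroup p lam) : ℝ) ^ k with hr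
  have hf0 : ∀ lam, 0 ≤ f lam := fun lam => by positivity
  have hcard : ∀ lam, (0 : ℝ) < Nat.card (CLGroup p lam) := fun lam => by
    exact_mod_cast Nat.card_pos
  have haut : ∀ lam, (0 : ℝ) < numAut (CLGroup p lam) := fun lam => by
    exact_mod_cast Nat.pos_of_ne_zero (numAut_pos _)
  have hk : ∀ k, ∑' lam, ENNReal.ofReal (f lam * r k lam) = latZeta p (Fin k → ℤ) (k + u) := by
    intro k
    rw [← sum_sur p hp]
    refine tsum_congr fun lam => ?_
    have h1 : f lam * r k lam = (numSur (Fin k → ℤ) (CLGroup p lam) : ℝ) *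
      (numAut (CLGroup p lam) : ℝ)⁻¹ * ((Nat.card (CLGroup p lam) : ℝ) ^ (k + u))⁻¹ := by
      simp only [hf, hr, pow_add, mul_inv, div_eq_mul_inv]
      ring
    have := haut lam
    have := hcard lam
    rw [h1, ENNReal.ofReal_mul (by positivity), ENNReal.ofReal_mul (by positivity),
      ENNReal.ofReal_inv_of_pos (by positivity), ENNReal.ofReal_inv_of_pos (by positivity),
      ENNReal.ofReal_pow (by positivity), ENNReal.ofReal_natCast, ENNReal.ofReal_natCast,
      ENNReal.ofReal_natCast]
  apply le_antisymm
  · rw [ENNReal.tsum_eq_iSup_sum]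
    refine iSup_le fun s => ?_
    have hs : Filter.Tendsto (fun k => ∑ lam ∈ s, ENNReal.ofReal (f lam * r k lam)) Filter.atTop
        (nhds (∑ lam ∈ s, ENNReal.ofReal (f lam))) := by
      refine tendsto_finsetSum _ fun lam _ => ENNReal.tendsto_ofReal ?_
      have := (tendsto_sur (CLGroup p lam)).const_mul (f lam)
      rwa [mul_one] at this
    exact le_of_tendsto_of_tendsto' hs hT fun k => hk k ▸ ENNReal.sum_le_tsum s
  · refine le_of_tendsto' hT fun k => ?_
    rw [← hk k]
    refine ENNReal.tsum_le_tsum fun lam => ENNReal.ofReal_le_ofReal ?_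
    refine mul_le_of_le_one_right (hf0 lam) ?_
    have := hcard lam
    simp only [hr]
    rw [div_le_one (by positivity)]
    exact_mod_cast numSur_le k (CLGroup p lam)

/-- The Cohen–Lenstra measure `μ^u` is a probability measure: the sum over isomorphism
classes of finite abelian `p`-groups `A` of `μ^u(A)` equals `1`. -/
theorem cl_measure_prob (p : ℕ) (hp : p.Prime) (hodd : Odd p) (u : ℕ) :
    ∑' lam : Multiset ℕ+, clMeasure p u (CLGroup p lam) = 1 := by
  have h := congrArg ENNReal.toReal (cl_total p hp u)
  rw [ENNReal.tsum_toReal_eq fun _ => ENNReal.ofReal_ne_top,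
    ENNReal.toReal_ofReal (inv_nonneg.2 (clProd_pos p hp u).le)] at h
  unfold clMeasure
  rw [tsum_mul_right]
  have h2 : ∀ lam : Multiset ℕ+, (ENNReal.ofReal (((Nat.card (CLGroup p lam) : ℝ) ^ u)⁻¹ *
      (numAut (CLGroup p lam) : ℝ)⁻¹)).toReal = ((Nat.card (CLGroup p lam) : ℝ) ^ u)⁻¹ *
      (numAut (CLGroup p lam) : ℝ)⁻¹ := fun lam => ENNReal.toReal_ofReal (by positivity)
  simp only [h2] at h
  rw [h, inv_mul_cancel₀ (clProd_ne p hp u)]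
end
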